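/- arXiv:2310.10112 — 3 statements merged into one kernel-verified Lean document; each statement's English description precedes it below -/
import Mathlib

section
/- Let f and m be integers with 3 ≤ m and m ∣ f. If some prime ℓ divides f, does not divide m, and satisfies ℓ ≡ 1 (mod m) (i.e. ℓ splits totally in the abelian field of conductor m), then the image of the Stickelberger element θ_f under the restriction map ℚ[(ℤ/fℤ)ˣ] → ℚ[(ℤ/mℤ)ˣ] is 0. -/
open MonoidAlgebra Finset
open scoped Classical

/-- The class of a natural number `a` coprime to `m` in `(ℤ/mℤ)ˣ`
(junk value `1` when `a` is not invertible mod `m`). -/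
noncomputable def unitOf (m a : ℕ) : (ZMod m)ˣ :=
  if h : IsUnit ((a : ZMod m)) then h.unit else 1

/-- The Stickelberger element `θ_N = -∑_a (a/N - 1/2)·[a]⁻¹ ∈ ℚ[(ℤ/Nℤ)ˣ]`,
the sum running over the integers `1 ≤ a ≤ N` coprime to `N`. -/
noncomputable def stickelberger (N : ℕ) : MonoidAlgebra ℚ (ZMod N)ˣ :=
  ∑ a ∈ (Finset.Icc 1 N).filter (fun a => Nat.Coprime a N),
    MonoidAlgebra.single (unitOf N a)⁻¹ (-((a : ℚ) / N - 1 / 2))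

/-!
The image of `θ_f` in `ℚ[(ℤ/mℤ)ˣ]` is a sum over all `1 ≤ a ≤ f` prime to `m` and to the primes
`p ∣ f`, `p ∤ m`. Sieving out the multiples `a = p * b` of one such prime removes `[p]⁻¹` times the
same kind of sum over `b ≤ f / p`, because `a / f = b / (f / p)`: each prime contributes a factor
`1 - [p]⁻¹`. With no prime left to sieve, Raabe's multiplication formula for the Bernoulli
polynomial `X - 1/2` collapses the sum over `1 ≤ a ≤ N`, `m ∣ N`, to `θ_m`. The resulting product
vanishes as soon as one of the primes has trivial class `[p]`, i.e. `p ≡ 1 (mod m)`.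
-/

section Sums

theorem sum_Icc_one_mul {M : Type*} [AddCommMonoid M] (m n : ℕ) (F : ℕ → M) :
    ∑ a ∈ Icc 1 (m * n), F a = ∑ i ∈ range n, ∑ r ∈ Icc 1 m, F (r + i * m) := by
  induction n with
  | zero => simp
  | succ n ih =>
    have last_block : ∑ r ∈ Icc 1 m, F (r + n * m) =
        ∑ a ∈ Ico (m * n + 1) (m * (n + 1) + 1), F a := by
      rw [← Ico_add_one_right_eq_Icc, sum_Ico_add']
      congr 2 <;> ring
    rw [sum_range_succ, ← ih, last_block]
    simp only [← Ico_add_one_right_eq_Icc]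
    exact (sum_Ico_consecutive F (by lia) (by lia)).symm

theorem sum_Icc_one_mul_filter_dvd {M : Type*} [AddCommMonoid M] {d : ℕ} (hd : d ≠ 0) (n : ℕ)
    (F : ℕ → M) : ∑ a ∈ Icc 1 (d * n) with d ∣ a, F a = ∑ b ∈ Icc 1 n, F (d * b) := by
  have hd_pos : 0 < d := Nat.pos_of_ne_zero hd
  have multiples : (Icc 1 (d * n)).filter (d ∣ ·) = (Icc 1 n).image (d * ·) := by
    ext a
    simp only [mem_filter, mem_image, mem_Icc]
    constructor
    · rintro ⟨⟨ha_pos, ha_le⟩, b, rfl⟩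
      exact ⟨b, ⟨Nat.pos_of_mul_pos_left ha_pos, Nat.le_of_mul_le_mul_left ha_le hd_pos⟩, rfl⟩
    · rintro ⟨b, ⟨hb_pos, hb_le⟩, rfl⟩
      exact ⟨⟨Nat.mul_pos hd_pos hb_pos, Nat.mul_le_mul_left d hb_le⟩, dvd_mul_right d b⟩
  rw [multiples, sum_image (mul_right_injective₀ hd).injOn]

theorem sum_Icc_one_mul_filter_and_not_dvd {M : Type*} [AddCommGroup M] {d : ℕ} (hd : d ≠ 0)
    (n : ℕ) (P : ℕ → Prop) [DecidablePred P] (F : ℕ → M) :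
    ∑ a ∈ Icc 1 (d * n) with P a ∧ ¬ d ∣ a, F a =
      ∑ a ∈ Icc 1 (d * n) with P a, F a - ∑ b ∈ Icc 1 n with P (d * b), F (d * b) := by
  have multiples : ∑ a ∈ Icc 1 (d * n) with P a ∧ d ∣ a, F a =
      ∑ b ∈ Icc 1 n with P (d * b), F (d * b) := by
    simp only [and_comm (a := P _)]
    rw [← filter_filter, sum_filter, sum_Icc_one_mul_filter_dvd hd, ← sum_filter]
  rw [← multiples, eq_sub_iff_add_eq', ← filter_filter, ← filter_filter,
    sum_filter_add_sum_filter_not]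

variable {K : Type*} [Field K] [CharZero K]

theorem sum_range_add_div_sub_half {n : ℕ} (hn : n ≠ 0) (x : K) :
    ∑ i ∈ range n, ((x + i) / n - 1 / 2) = x - 1 / 2 := by
  have partial_sum (k : ℕ) : ∑ i ∈ range k, ((x + i) / n - 1 / 2) =
      (k * x + k * (k - 1) / 2) / n - k / 2 := by
    induction k with
    | zero => simp
    | succ k ih =>
      rw [sum_range_succ, ih]
      push_cast
      ring
  have hn' : (n : K) ≠ 0 := Nat.cast_ne_zero.mpr hn
  rw [partial_sum]
  field_simp
  ring

theorem sum_div_sub_half_smul_of_periodic {M : Type*} [AddCommGroup M] [Module K M]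
    {m : ℕ} {w : ℕ → M} (hw : Function.Periodic w m) {n : ℕ} (hn : n ≠ 0) :
    ∑ a ∈ Icc 1 (m * n), ((a : K) / (m * n : ℕ) - 1 / 2) • w a =
      ∑ r ∈ Icc 1 m, ((r : K) / m - 1 / 2) • w r := by
  rw [sum_Icc_one_mul, sum_comm]
  refine sum_congr rfl fun r hr => ?_
  have hm : (m : K) ≠ 0 := by
    have := mem_Icc.mp hr
    exact Nat.cast_ne_zero.mpr (by lia)
  have rescale (i : ℕ) : ((r + i * m : ℕ) : K) / (m * n : ℕ) = (r / m + i) / n := by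
    push_cast
    field_simp
  have periodic (i : ℕ) : w (r + i * m) = w r := hw.nat_mul i r
  simp only [periodic, rescale]
  rw [← sum_smul, sum_range_add_div_sub_half hn]

end Sums

section UnitOf

variable {m a b : ℕ}

theorem coe_unitOf_of_coprime (h : a.Coprime m) : (unitOf m a : ZMod m) = a := by
  simp [unitOf, (ZMod.isUnit_iff_coprime a m).mpr h]

theorem unitOf_congr (h : (a : ZMod m) = b) : unitOf m a = unitOf m b := by
  simp only [unitOf, h]

theorem unitOf_mul (ha : a.Coprime m) (hb : b.Coprime m) :
    unitOf m (a * b) = unitOf m a * unitOf m b := by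
  ext
  rw [Units.val_mul, coe_unitOf_of_coprime ha, coe_unitOf_of_coprime hb,
    coe_unitOf_of_coprime (ha.mul_left hb), Nat.cast_mul]

theorem unitOf_eq_one_of_modEq_one (h : a ≡ 1 [MOD m]) : unitOf m a = 1 := by
  have ha : (a : ZMod m) = 1 := by simpa using (ZMod.natCast_eq_natCast_iff a 1 m).mpr h
  ext
  simp [unitOf, ha]

theorem map_castHom_unitOf {f : ℕ} (hdvd : m ∣ f) (ha : a.Coprime f) :
    Units.map (ZMod.castHom hdvd (ZMod m)).toMonoidHom (unitOf f a) = unitOf m a := by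
  ext
  simp [coe_unitOf_of_coprime ha, coe_unitOf_of_coprime (ha.coprime_dvd_right hdvd)]

end UnitOf

/-- The Stickelberger-type sum in `ℚ[(ℤ/mℤ)ˣ]` over the integers `1 ≤ a ≤ N` coprime to `m` and not
divisible by any element of `S`. It interpolates between `θ_m` (`N = m` and `S = ∅`) and the
restriction of `θ_f` to level `m` (`N = f` and `S` the primes dividing `f` but not `m`). -/
noncomputable def depletedStickelberger (m N : ℕ) (S : Finset ℕ) : MonoidAlgebra ℚ (ZMod m)ˣ :=
  ∑ a ∈ Icc 1 N with a.Coprime m ∧ ∀ p ∈ S, ¬ p ∣ a,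
    single (unitOf m a)⁻¹ (-((a : ℚ) / N - 1 / 2))

section Depleted

theorem depletedStickelberger_mul_empty (m : ℕ) {n : ℕ} (hn : n ≠ 0) :
    depletedStickelberger m (m * n) ∅ = stickelberger m := by
  let w (a : ℕ) : MonoidAlgebra ℚ (ZMod m)ˣ :=
    if a.Coprime m then single (unitOf m a)⁻¹ (-1) else 0
  have periodic : Function.Periodic w m := fun a => by
    have class_eq : unitOf m (a + m) = unitOf m a := unitOf_congr (by simp)
    simp only [w, class_eq, Nat.coprime_add_self_left]
  have weighted (N : ℕ) : ∑ a ∈ Icc 1 N with a.Coprime m,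
        single (unitOf m a)⁻¹ (-((a : ℚ) / N - 1 / 2)) =
      ∑ a ∈ Icc 1 N, ((a : ℚ) / N - 1 / 2) • w a := by
    simp only [w, sum_filter, smul_ite, smul_single, smul_zero, smul_eq_mul, mul_neg, mul_one]
  simp only [depletedStickelberger, stickelberger, notMem_empty, false_implies, implies_true,
    and_true, weighted]
  exact sum_div_sub_half_smul_of_periodic periodic hn

variable {m : ℕ}

theorem depletedStickelberger_mul_insert {ℓ : ℕ} (hℓ : ℓ ≠ 0) (hℓm : ℓ.Coprime m) {S : Finset ℕ}
    (hS : ∀ p ∈ S, p.Coprime ℓ) (N : ℕ) :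
    depletedStickelberger m (ℓ * N) (insert ℓ S) = depletedStickelberger m (ℓ * N) S -
      single (unitOf m ℓ)⁻¹ 1 * depletedStickelberger m N S := by
  have sieved_condition (a : ℕ) : (a.Coprime m ∧ ∀ p ∈ insert ℓ S, ¬ p ∣ a) ↔
      (a.Coprime m ∧ ∀ p ∈ S, ¬ p ∣ a) ∧ ¬ ℓ ∣ a := by
    rw [forall_mem_insert, and_comm (a := ¬ ℓ ∣ a), and_assoc]
  have condition_mul (b : ℕ) : ((ℓ * b).Coprime m ∧ ∀ p ∈ S, ¬ p ∣ ℓ * b) ↔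
      b.Coprime m ∧ ∀ p ∈ S, ¬ p ∣ b :=
    and_congr (Nat.coprime_mul_iff_left.trans (and_iff_right hℓm))
      (forall₂_congr fun p hp => not_congr (hS p hp).dvd_mul_left)
  have term_mul (b : ℕ) (hb : b.Coprime m) :
      single (unitOf m (ℓ * b))⁻¹ (-(((ℓ * b : ℕ) : ℚ) / (ℓ * N : ℕ) - 1 / 2)) =
        single (unitOf m ℓ)⁻¹ 1 * single (unitOf m b)⁻¹ (-((b : ℚ) / N - 1 / 2)) := by
    have hℓ' : (ℓ : ℚ) ≠ 0 := Nat.cast_ne_zero.mpr hℓ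
    simp only [unitOf_mul hℓm hb, mul_inv, single_mul_single, one_mul, Nat.cast_mul,
      mul_div_mul_left _ _ hℓ']
  rw [depletedStickelberger, filter_congr fun a _ => sieved_condition a,
    sum_Icc_one_mul_filter_and_not_dvd hℓ, filter_congr fun b _ => condition_mul b]
  simp only [depletedStickelberger, mul_sum]
  exact congrArg _ (sum_congr rfl fun b hb => term_mul b (mem_filter.mp hb).2.1)

theorem depletedStickelberger_eq_prod_mul {S : Finset ℕ} (hS : (S : Set ℕ).Pairwise Nat.Coprime)
    (hSm : ∀ p ∈ S, p.Coprime m) {N : ℕ} (hN : N ≠ 0) (hdvd : m * ∏ p ∈ S, p ∣ N) :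
    depletedStickelberger m N S =
      (∏ p ∈ S, (1 - single (unitOf m p)⁻¹ 1)) * stickelberger m := by
  induction S using Finset.induction_on generalizing N with
  | empty =>
    obtain ⟨n, rfl⟩ : m ∣ N := by simpa using hdvd
    rw [depletedStickelberger_mul_empty m (right_ne_zero_of_mul hN), prod_empty, one_mul]
  | insert ℓ S hℓS ih =>
    rw [prod_insert hℓS, mul_left_comm] at hdvd
    obtain ⟨N, rfl⟩ : ℓ ∣ N := dvd_of_mul_right_dvd hdvd
    have hℓ : ℓ ≠ 0 := left_ne_zero_of_mul hN
    have hdvd' : m * ∏ p ∈ S, p ∣ N := Nat.dvd_of_mul_dvd_mul_left (Nat.pos_of_ne_zero hℓ) hdvd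
    rw [coe_insert, Set.pairwise_insert_of_symm_of_notMem (mod_cast hℓS)] at hS
    rw [forall_mem_insert] at hSm
    rw [depletedStickelberger_mul_insert hℓ hSm.1 (fun p hp => (hS.2 p hp).symm),
      ih hS.1 hSm.2 hN (hdvd'.mul_left ℓ), ih hS.1 hSm.2 (right_ne_zero_of_mul hN) hdvd',
      prod_insert hℓS]
    ring

end Depleted

section Norm

variable {f m : ℕ}

theorem coprime_of_mem_primeFactors_sdiff {p : ℕ} (hm : m ≠ 0)
    (hp : p ∈ f.primeFactors \ m.primeFactors) : p.Coprime m := by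
  rw [mem_sdiff, Nat.mem_primeFactors_of_ne_zero hm] at hp
  have hp_prime : p.Prime := Nat.prime_of_mem_primeFactors hp.1
  exact hp_prime.coprime_iff_not_dvd.mpr fun h => hp.2 ⟨hp_prime, h⟩

theorem coprime_iff_coprime_and_forall_not_dvd (hdvd : m ∣ f) (hf : f ≠ 0) {a : ℕ} :
    a.Coprime f ↔ a.Coprime m ∧ ∀ p ∈ f.primeFactors \ m.primeFactors, ¬ p ∣ a := by
  constructor
  · intro ha
    refine ⟨ha.coprime_dvd_right hdvd, fun p hp hpa => ?_⟩
    have hpf := mem_sdiff.mp hp |>.1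
    exact Nat.not_coprime_of_dvd_of_dvd (Nat.prime_of_mem_primeFactors hpf).one_lt hpa
      (Nat.dvd_of_mem_primeFactors hpf) ha
  · rintro ⟨ham, haS⟩
    refine Nat.coprime_of_dvd fun p hp hpa hpf => ?_
    refine haS p (mem_sdiff.mpr ⟨hp.mem_primeFactors hpf hf, fun hpm => ?_⟩) hpa
    exact Nat.not_coprime_of_dvd_of_dvd hp.one_lt hpa (Nat.dvd_of_mem_primeFactors hpm) ham

theorem mul_prod_primeFactors_sdiff_dvd (hdvd : m ∣ f) (hf : f ≠ 0) :
    m * ∏ p ∈ f.primeFactors \ m.primeFactors, p ∣ f := by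
  have coprime : m.Coprime (∏ p ∈ f.primeFactors \ m.primeFactors, p) :=
    Nat.Coprime.prod_right fun p hp =>
      (coprime_of_mem_primeFactors_sdiff (ne_zero_of_dvd_ne_zero hf hdvd) hp).symm
  exact coprime.mul_dvd_of_dvd_of_dvd hdvd
    ((prod_dvd_prod_of_subset _ _ _ sdiff_subset).trans (Nat.prod_primeFactors_dvd f))

theorem mapDomainRingHom_stickelberger_eq_depletedStickelberger (hdvd : m ∣ f) (hf : f ≠ 0) :
    MonoidAlgebra.mapDomainRingHom ℚ
        (Units.map (ZMod.castHom hdvd (ZMod m)).toMonoidHom) (stickelberger f) =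
      depletedStickelberger m f (f.primeFactors \ m.primeFactors) := by
  rw [stickelberger, map_sum]
  refine sum_congr (filter_congr fun a _ => coprime_iff_coprime_and_forall_not_dvd hdvd hf)
    fun a ha => ?_
  have haf : a.Coprime f :=
    (coprime_iff_coprime_and_forall_not_dvd hdvd hf).mpr (mem_filter.mp ha).2
  rw [mapDomainRingHom_apply, mapDomain_single, map_inv, map_castHom_unitOf hdvd haf]

theorem mapDomainRingHom_stickelberger (hdvd : m ∣ f) (hf : f ≠ 0) :
    MonoidAlgebra.mapDomainRingHom ℚ
        (Units.map (ZMod.castHom hdvd (ZMod m)).toMonoidHom) (stickelberger f) =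
      (∏ p ∈ f.primeFactors \ m.primeFactors, (1 - single (unitOf m p)⁻¹ 1)) *
        stickelberger m := by
  have pairwise_coprime :
      ((f.primeFactors \ m.primeFactors : Finset ℕ) : Set ℕ).Pairwise Nat.Coprime := by
    intro p hp q hq hpq
    have prime_of_mem {r : ℕ} (hr : r ∈ f.primeFactors \ m.primeFactors) : r.Prime :=
      Nat.prime_of_mem_primeFactors (mem_sdiff.mp hr).1
    exact (Nat.coprime_primes (prime_of_mem hp) (prime_of_mem hq)).mpr hpq
  rw [mapDomainRingHom_stickelberger_eq_depletedStickelberger hdvd hf]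
  exact depletedStickelberger_eq_prod_mul pairwise_coprime
    (fun p => coprime_of_mem_primeFactors_sdiff (ne_zero_of_dvd_ne_zero hf hdvd)) hf
    (mul_prod_primeFactors_sdiff_dvd hdvd hf)

end Norm

/-- If some prime `ℓ` divides `f`, does not divide `m`, and satisfies `ℓ ≡ 1 (mod m)`
(total splitting in the abelian field of conductor `m`), then the image of `θ_f` under the
restriction map `ℚ[(ℤ/fℤ)ˣ] → ℚ[(ℤ/mℤ)ˣ]` vanishes. -/
theorem stickelberger_norm_eq_zero (f m : ℕ) (hm : 3 ≤ m) (hf : 3 ≤ f) (hdvd : m ∣ f)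
    (ℓ : ℕ) (hℓ : ℓ.Prime) (hℓf : ℓ ∣ f) (hℓm : ¬ ℓ ∣ m) (hsplit : ℓ % m = 1) :
    MonoidAlgebra.mapDomainRingHom ℚ
        (Units.map (ZMod.castHom hdvd (ZMod m)).toMonoidHom) (stickelberger f) = 0 := by
  have hf0 : f ≠ 0 := by lia
  have ℓ_mem : ℓ ∈ f.primeFactors \ m.primeFactors :=
    mem_sdiff.mpr ⟨hℓ.mem_primeFactors hℓf hf0, fun h => hℓm (Nat.dvd_of_mem_primeFactors h)⟩
  have class_one : unitOf m ℓ = 1 :=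
    unitOf_eq_one_of_modEq_one (hsplit.trans (Nat.mod_eq_of_lt (by lia)).symm)
  have factor_zero : 1 - single (unitOf m ℓ)⁻¹ (1 : ℚ) = 0 := by
    rw [class_one, inv_one, ← one_def, sub_self]
  rw [mapDomainRingHom_stickelberger hdvd hf0, prod_eq_zero ℓ_mem factor_zero, zero_mul]
end

section
/- Let f be an integer with gcd(f, 3) = 1 and let χ be a primitive Dirichlet character of conductor f and order 3 (so f is a squarefree product of t distinct primes, each ≡ 1 (mod 3)). Set S_χ = ∑_{a=1}^{f} χ(a)·(a² − f·a) ∈ ℂ. Then the product S_χ · S_{χ²} is a rational integer divisible by 3^(t−1). -/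
open Finset

/-!
Let `ω` be a primitive cube root of unity. Since `χ ^ 3 = 1`, the components `χ_p` of `χ` are
congruent, modulo `1 - ω`, to the trivial characters `1_p`. Expand `∏ p, (χ_p - 1_p)`: the full
product contributes a multiple of `(1 - ω) ^ t`, and every term other than `∏ p, χ_p` contains a
trivial component. Removing a trivial component at `p` leaves the sum at the smaller level times the
Euler factor `p (1 - p ψ(p)) ≡ 0 (mod 1 - ω)`, up to a multiple of `∑ ψ(a) = ∏ q, ∑ ψ_q(c)`, each
factor of which is `≡ q - 1 ≡ 0 (mod 1 - ω)`. So by induction `S_χ` is divisible by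
`(1 - ω) ^ (t - 1)`. As `S_{χ²}` is the complex conjugate of `S_χ`, the product `S_χ S_{χ²}` is the
norm of an element of `ℤ[ω]`, and `1 - ω` has norm `3`.
-/

section Distribution

lemma sum_range_mul_eq_sum_sum {M : Type*} [AddCommMonoid M] (p m : ℕ) (h : ℕ → M) :
    ∑ a ∈ range (p * m), h a = ∑ x ∈ range m, ∑ k ∈ range p, h (x + k * m) := by
  rw [sum_comm]
  induction p with
  | zero => simp
  | succ p ih =>
    rw [Nat.succ_mul, sum_range_add, ih, sum_range_succ]
    simp only [add_comm]

lemma sum_range_mul_filter_dvd {M : Type*} [AddCommMonoid M] {p : ℕ} (hp : 0 < p) (m : ℕ)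
    (h : ℕ → M) :
    ∑ a ∈ range (p * m) with p ∣ a, h a = ∑ b ∈ range m, h (p * b) := by
  symm
  refine sum_bij (fun b _ ↦ p * b) ?_ ?_ ?_ (fun _ _ ↦ rfl)
  · intro b hb
    simpa [hp] using hb
  · intro b _ c _ hbc
    exact Nat.eq_of_mul_eq_mul_left hp hbc
  · rintro a ha
    obtain ⟨ha, b, rfl⟩ := mem_filter.1 ha
    exact ⟨b, by simpa [hp] using ha, rfl⟩

lemma two_mul_choose_two_add (n : ℕ) : 2 * n.choose 2 + n = n ^ 2 := by
  induction n with
  | zero => simp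
  | succ n ih => rw [Nat.choose_succ_succ' n 1, Nat.choose_one_right]; linarith

lemma three_mul_choose_three_add (n : ℕ) : 3 * n.choose 3 + 2 * n.choose 2 = n * n.choose 2 := by
  induction n with
  | zero => simp
  | succ n ih =>
    rw [Nat.choose_succ_succ' n 1, Nat.choose_succ_succ' n 2, Nat.choose_one_right]
    linarith [two_mul_choose_two_add n]

variable {R : Type*} [CommRing R]

lemma sum_range_add_mul_sq_sub (n : ℕ) (x m M : R) :
    ∑ k ∈ range n, ((x + k * m) ^ 2 - M * (x + k * m)) =
      n * (x ^ 2 - M * x) + (2 * x - M) * m * n.choose 2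
        + m ^ 2 * (n.choose 2 + 2 * n.choose 3) := by
  induction n with
  | zero => simp
  | succ n ih =>
    have hsq : 2 * (n.choose 2 : R) + n = n ^ 2 :=
      mod_cast congrArg (Nat.cast : ℕ → R) (two_mul_choose_two_add n)
    rw [sum_range_succ, ih, Nat.choose_succ_succ' n 1, Nat.choose_succ_succ' n 2,
      Nat.choose_one_right]
    push_cast
    linear_combination -m ^ 2 * hsq

-- The distribution relation of the second Bernoulli polynomial,
-- as `m² B₂(x / m) = x² - m x + m² / 6`.
lemma sum_range_quadratic_distribution (n : ℕ) (x m : R) :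
    ∑ k ∈ range n, ((x + k * m) ^ 2 - n * m * (x + k * m)) =
      n * (x ^ 2 - m * x) - m ^ 2 * (n + 1).choose 3 := by
  have hsq : 2 * (n.choose 2 : R) + n = n ^ 2 :=
    mod_cast congrArg (Nat.cast : ℕ → R) (two_mul_choose_two_add n)
  have hcube : 3 * (n.choose 3 : R) + 2 * n.choose 2 = n * n.choose 2 :=
    mod_cast congrArg (Nat.cast : ℕ → R) (three_mul_choose_three_add n)
  rw [sum_range_add_mul_sq_sub, Nat.choose_succ_succ' n 2]
  push_cast
  linear_combination x * m * hsq + m ^ 2 * hcube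

lemma sum_range_mul_quadratic_of_periodic {m : ℕ} (p : ℕ) {v : ℕ → R}
    (hv : Function.Periodic v m) :
    ∑ a ∈ range (p * m), v a * ((a : R) ^ 2 - (p * m : ℕ) * a) =
      p * ∑ x ∈ range m, v x * ((x : R) ^ 2 - m * x) -
        m ^ 2 * (p + 1).choose 3 * ∑ x ∈ range m, v x := by
  rw [sum_range_mul_eq_sum_sum, mul_sum, mul_sum, ← sum_sub_distrib]
  refine sum_congr rfl fun x _ ↦ ?_
  have hvx (k : ℕ) : v (x + k * m) = v x := hv.nat_mul k x
  simp only [hvx, ← mul_sum, Nat.cast_add, Nat.cast_mul, sum_range_quadratic_distribution]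
  ring

lemma sum_filter_not_dvd_quadratic_of_periodic {m p : ℕ} (hp : 0 < p) {v : ℕ → R}
    (hv : Function.Periodic v m) {e : R} (he : ∀ b, v (p * b) = e * v b) :
    ∑ a ∈ range (p * m) with ¬p ∣ a, v a * ((a : R) ^ 2 - (p * m : ℕ) * a) =
      p * (1 - p * e) * ∑ x ∈ range m, v x * ((x : R) ^ 2 - m * x) -
        m ^ 2 * (p + 1).choose 3 * ∑ x ∈ range m, v x := by
  have hdvd : ∑ a ∈ range (p * m) with p ∣ a, v a * ((a : R) ^ 2 - (p * m : ℕ) * a) =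
      p ^ 2 * e * ∑ x ∈ range m, v x * ((x : R) ^ 2 - m * x) := by
    rw [sum_range_mul_filter_dvd hp, mul_sum]
    refine sum_congr rfl fun b _ ↦ ?_
    rw [he]
    push_cast
    ring
  have hsplit := sum_filter_add_sum_filter_not (range (p * m)) (p ∣ ·)
    fun a ↦ v a * ((a : R) ^ 2 - (p * m : ℕ) * a)
  rw [sum_range_mul_quadratic_of_periodic p hv, hdvd] at hsplit
  linear_combination hsplit

lemma sum_range_add_mul_eq_sum_zmod {M : Type*} [AddCommMonoid M] {p m : ℕ} [NeZero p]
    (hpm : p.Coprime m) (h : ZMod p → M) (x : ℕ) :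
    ∑ k ∈ range p, h ((x + k * m : ℕ) : ZMod p) = ∑ c, h c := by
  let u : (ZMod p)ˣ := ZMod.unitOfCoprime m hpm.symm
  let affine : ZMod p ≃ ZMod p := (u.mulRight).trans (Equiv.addLeft (x : ZMod p))
  calc
    ∑ k ∈ range p, h ((x + k * m : ℕ) : ZMod p) = ∑ k ∈ range p, h (affine k) := by
      simp [affine, u]
    _ = ∑ c, h (affine c) := by
      refine sum_nbij (↑) (by simp) (fun k hk l hl hkl ↦ ?_) (fun c _ ↦ ?_) (fun _ _ ↦ rfl)
      · rw [coe_range, Set.mem_Iio] at hk hl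
        rwa [ZMod.natCast_eq_natCast_iff', Nat.mod_eq_of_lt hk, Nat.mod_eq_of_lt hl] at hkl
      · exact ⟨c.val, by simp [ZMod.val_lt], ZMod.natCast_zmod_val c⟩
    _ = ∑ c, h c := affine.sum_comp h

lemma sum_range_mul_mul_of_coprime {p m : ℕ} [NeZero p] (hpm : p.Coprime m) (h : ZMod p → R)
    {v : ℕ → R} (hv : Function.Periodic v m) :
    ∑ a ∈ range (p * m), h a * v a = (∑ c, h c) * ∑ x ∈ range m, v x := by
  rw [sum_range_mul_eq_sum_sum, mul_sum]
  refine sum_congr rfl fun x _ ↦ ?_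
  have hvx (k : ℕ) : v (x + k * m) = v x := hv.nat_mul k x
  simp only [hvx, ← sum_mul, sum_range_add_mul_eq_sum_zmod hpm h x]

end Distribution

section StickelbergerSum

variable {R : Type*} [CommRing R]

lemma one_apply_natCast_of_prime {p : ℕ} (hp : p.Prime) (a : ℕ) :
    (1 : DirichletCharacter R p) a = if p ∣ a then 0 else 1 := by
  split_ifs with h
  · refine MulChar.map_nonunit _ ?_
    rwa [ZMod.isUnit_iff_coprime, Nat.coprime_comm, hp.coprime_iff_not_dvd, not_not]
  · exact MulChar.one_apply ((ZMod.isUnit_iff_coprime a p).2 (hp.coprime_iff_not_dvd.2 h).symm)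

lemma coprime_prod_of_forall_prime {P : Finset ℕ} (hP : ∀ q ∈ P, q.Prime) {p : ℕ} (hp : p.Prime)
    (hpP : p ∉ P) : p.Coprime (∏ q ∈ P, q) :=
  Nat.Coprime.prod_right fun q hq ↦
    (Nat.coprime_primes hp (hP q hq)).2 (ne_of_mem_of_not_mem hq hpP).symm

/-- The sum `∑ χ(a) (a ^ 2 - f a)` over `0 ≤ a < f`, for the modulus `f = ∏ p ∈ P, p` and the
character `χ = ∏ p ∈ P, χ p`; if `χ` is primitive and `f ≠ 1`, it is `f * B_{2,χ}`. The character is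
given by its components because the argument replaces some of them by trivial characters. -/
def stickelbergerSum (P : Finset ℕ) (χ : (p : ℕ) → DirichletCharacter R p) : R :=
  ∑ a ∈ range (∏ p ∈ P, p), (∏ p ∈ P, χ p a) * ((a : R) ^ 2 - (∏ p ∈ P, p : ℕ) * a)

variable {P : Finset ℕ} {χ : (p : ℕ) → DirichletCharacter R p}

lemma periodic_prod_dirichletCharacter :
    Function.Periodic (fun a : ℕ ↦ ∏ p ∈ P, χ p a) (∏ p ∈ P, p) := fun a ↦
  prod_congr rfl fun q hq ↦ by
    rw [Nat.cast_add, (ZMod.natCast_eq_zero_iff _ _).2 (dvd_prod_of_mem _ hq), add_zero]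

lemma stickelbergerSum_insert_of_eq_one {p : ℕ} (hp : p.Prime) (hpP : p ∉ P) (hχp : χ p = 1) :
    stickelbergerSum (insert p P) χ =
      p * (1 - p * ∏ q ∈ P, χ q p) * stickelbergerSum P χ -
        (∏ q ∈ P, q : ℕ) ^ 2 * (p + 1).choose 3 *
          ∑ a ∈ range (∏ q ∈ P, q), ∏ q ∈ P, χ q a := by
  have hmul (b : ℕ) : ∏ q ∈ P, χ q (p * b : ℕ) = (∏ q ∈ P, χ q p) * ∏ q ∈ P, χ q b := by
    simp only [Nat.cast_mul, map_mul, prod_mul_distrib]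
  simp only [stickelbergerSum]
  rw [← sum_filter_not_dvd_quadratic_of_periodic hp.pos (periodic_prod_dirichletCharacter) hmul,
    prod_insert hpP, sum_filter]
  refine sum_congr rfl fun a _ ↦ ?_
  rw [prod_insert hpP, hχp, one_apply_natCast_of_prime hp, ite_not]
  split_ifs <;> simp

variable (P χ) in
lemma sum_powerset_stickelbergerSum_piecewise :
    ∑ T ∈ P.powerset, (-1) ^ #T * stickelbergerSum P (T.piecewise 1 χ) =
      ∑ a ∈ range (∏ p ∈ P, p), (∏ p ∈ P, (χ p a - (1 : DirichletCharacter R p) a)) *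
        ((a : R) ^ 2 - (∏ p ∈ P, p : ℕ) * a) := by
  simp only [stickelbergerSum, mul_sum]
  rw [sum_comm]
  refine sum_congr rfl fun a _ ↦ ?_
  rw [prod_sub, sum_mul]
  refine sum_congr rfl fun T hT ↦ ?_
  have hpiecewise (p : ℕ) : (T.piecewise 1 χ p) a =
      T.piecewise (fun q ↦ (1 : DirichletCharacter R q) a) (fun q ↦ χ q a) p := by
    by_cases hp : p ∈ T <;> simp [hp]
  simp only [hpiecewise]
  rw [prod_piecewise, inter_eq_right.2 (mem_powerset.1 hT)]
  ring

variable {I : Ideal R}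

lemma sub_one_apply_mem_of_ringHomComp_mk_eq_one {n : ℕ} {ψ : DirichletCharacter R n}
    (hψ : ψ.ringHomComp (Ideal.Quotient.mk I) = 1) (a : ZMod n) :
    ψ a - (1 : DirichletCharacter R n) a ∈ I := by
  rw [← Ideal.Quotient.eq, ← MulChar.ringHomComp_apply, ← MulChar.ringHomComp_apply, hψ,
    MulChar.ringHomComp_one]

lemma sum_dirichletCharacter_mem {p : ℕ} [Fact p.Prime] (hp : (p : R ⧸ I) = 1)
    {ψ : DirichletCharacter R p} (hψ : ψ.ringHomComp (Ideal.Quotient.mk I) = 1) :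
    ∑ c, ψ c ∈ I := by
  rw [← Ideal.Quotient.eq_zero_iff_mem, map_sum]
  simp_rw [← MulChar.ringHomComp_apply, hψ]
  rw [MulChar.sum_one_eq_card_units, ZMod.card_units, Nat.cast_sub (Fact.out : p.Prime).one_le,
    hp, Nat.cast_one, sub_self]

lemma sum_prod_dirichletCharacter_mem_pow (hP : ∀ p ∈ P, p.Prime)
    (hPI : ∀ p ∈ P, (p : R ⧸ I) = 1)
    (hχ : ∀ p ∈ P, (χ p).ringHomComp (Ideal.Quotient.mk I) = 1) :
    ∑ a ∈ range (∏ p ∈ P, p), ∏ p ∈ P, χ p a ∈ I ^ #P := by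
  induction P using Finset.induction_on with
  | empty => simp
  | insert p P hpP ih =>
    rw [forall_mem_insert] at hP hPI hχ
    have := Fact.mk hP.1
    simp only [prod_insert hpP]
    rw [sum_range_mul_mul_of_coprime (coprime_prod_of_forall_prime hP.2 hP.1 hpP) (χ p)
      (periodic_prod_dirichletCharacter), card_insert_of_notMem hpP, pow_succ']
    exact Ideal.mul_mem_mul (sum_dirichletCharacter_mem hPI.1 hχ.1) (ih hP.2 hPI.2 hχ.2)

lemma one_sub_mul_prod_apply_mem (hP : ∀ q ∈ P, q.Prime)
    (hχ : ∀ q ∈ P, (χ q).ringHomComp (Ideal.Quotient.mk I) = 1) {p : ℕ} (hp : p.Prime)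
    (hpI : (p : R ⧸ I) = 1) (hpP : p ∉ P) :
    1 - p * ∏ q ∈ P, χ q p ∈ I := by
  rw [← Ideal.Quotient.eq_zero_iff_mem, map_sub, map_one, map_mul, map_natCast, hpI, one_mul,
    map_prod, sub_eq_zero, eq_comm]
  refine prod_eq_one fun q hq ↦ ?_
  rw [← MulChar.ringHomComp_apply, hχ q hq]
  refine MulChar.one_apply ((ZMod.isUnit_iff_coprime p q).2 ?_)
  exact (Nat.coprime_primes hp (hP q hq)).2 (ne_of_mem_of_not_mem hq hpP).symm

lemma stickelbergerSum_insert_mem_pow (hP : ∀ q ∈ P, q.Prime)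
    (hPI : ∀ q ∈ P, (q : R ⧸ I) = 1)
    (hχ : ∀ q ∈ P, (χ q).ringHomComp (Ideal.Quotient.mk I) = 1)
    (hSP : stickelbergerSum P χ ∈ I ^ (#P - 1)) {p : ℕ} (hp : p.Prime)
    (hpI : (p : R ⧸ I) = 1) (hpP : p ∉ P) (hχp : χ p = 1) :
    stickelbergerSum (insert p P) χ ∈ I ^ #P := by
  rw [stickelbergerSum_insert_of_eq_one hp hpP hχp, mul_assoc (p : R)]
  refine sub_mem (Ideal.mul_mem_left _ _ ?_)
    (Ideal.mul_mem_left _ _ (sum_prod_dirichletCharacter_mem_pow hP hPI hχ))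
  refine Ideal.pow_le_pow_right (Nat.le_succ_of_pred_le le_rfl : #P ≤ #P - 1 + 1) ?_
  rw [pow_succ']
  exact Ideal.mul_mem_mul (one_sub_mul_prod_apply_mem hP hχ hp hpI hpP) hSP

lemma sum_prod_sub_one_mul_mem_pow (hχ : ∀ p ∈ P, (χ p).ringHomComp (Ideal.Quotient.mk I) = 1)
    (N : ℕ) (w : ℕ → R) :
    ∑ a ∈ range N, (∏ p ∈ P, (χ p a - (1 : DirichletCharacter R p) a)) * w a ∈ I ^ #P := by
  refine sum_mem fun a _ ↦ Ideal.mul_mem_right _ _ ?_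
  rw [← prod_const]
  exact Ideal.prod_mem_prod fun p hp ↦ sub_one_apply_mem_of_ringHomComp_mk_eq_one (hχ p hp) a

theorem stickelbergerSum_mem_pow (hP : ∀ p ∈ P, p.Prime) (hPI : ∀ p ∈ P, (p : R ⧸ I) = 1)
    (hχ : ∀ p ∈ P, (χ p).ringHomComp (Ideal.Quotient.mk I) = 1) :
    stickelbergerSum P χ ∈ I ^ (#P - 1) := by
  induction P using Finset.strongInduction generalizing χ with
  | H P ih =>
  have hdegenerate : ∀ T ∈ P.powerset.erase ∅,
      (-1) ^ #T * stickelbergerSum P (T.piecewise 1 χ) ∈ I ^ (#P - 1) := by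
    intro T hT
    obtain ⟨hTne, hTP⟩ := mem_erase.1 hT
    obtain ⟨p, hpT⟩ := nonempty_iff_ne_empty.2 hTne
    have hψ : ∀ q ∈ P, (T.piecewise 1 χ q).ringHomComp (Ideal.Quotient.mk I) = 1 := by
      intro q hq
      by_cases hqT : q ∈ T
      · simp [hqT, MulChar.ringHomComp_one]
      · simpa [hqT] using hχ q hq
    obtain ⟨Q, hpQ, rfl⟩ : ∃ Q, p ∉ Q ∧ insert p Q = P :=
      ⟨P.erase p, notMem_erase p P, insert_erase (mem_powerset.1 hTP hpT)⟩
    rw [forall_mem_insert] at hP hPI hψ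
    rw [card_insert_of_notMem hpQ, Nat.add_sub_cancel]
    exact Ideal.mul_mem_left _ _ <| stickelbergerSum_insert_mem_pow hP.2 hPI.2 hψ.2
      (ih Q (ssubset_insert hpQ) hP.2 hPI.2 hψ.2) hP.1 hPI.1 hpQ (by simp [hpT])
  have hexpand := sum_powerset_stickelbergerSum_piecewise P χ
  rw [← add_sum_erase _ _ (empty_mem_powerset P), card_empty, pow_zero, one_mul,
    piecewise_empty] at hexpand
  rw [eq_sub_of_add_eq hexpand]
  exact sub_mem (Ideal.pow_le_pow_right (Nat.sub_le _ _) (sum_prod_sub_one_mul_mem_pow hχ _ _))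
    (sum_mem hdegenerate)

end StickelbergerSum

section Components

variable {R : Type*} [CommRing R]

lemma exists_dirichletCharacter_mul_of_coprime {m n : ℕ} (hmn : m.Coprime n)
    (ψ : DirichletCharacter R (m * n)) :
    ∃ (χ₁ : DirichletCharacter R m) (χ₂ : DirichletCharacter R n),
      (∀ a : ℕ, ψ a = χ₁ a * χ₂ a) ∧ ∀ k, ψ ^ k = 1 → χ₁ ^ k = 1 ∧ χ₂ ^ k = 1 := by
  let e : (ZMod (m * n))ˣ ≃* (ZMod m)ˣ × (ZMod n)ˣ :=
    (Units.mapEquiv (ZMod.chineseRemainder hmn).toMulEquiv).trans MulEquiv.prodUnits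
  let φ : (ZMod m)ˣ × (ZMod n)ˣ →* Rˣ := ψ.toUnitHom.comp e.symm.toMonoidHom
  have hφ (u) : (φ u : R) = ψ (e.symm u : (ZMod (m * n))ˣ) := MulChar.coe_toUnitHom _ _
  refine ⟨.ofUnitHom (φ.comp (.inl _ _)), .ofUnitHom (φ.comp (.inr _ _)), fun a ↦ ?_,
    fun k hk ↦ ?_⟩
  · by_cases ha : a.Coprime (m * n)
    · obtain ⟨u, hu⟩ := (ZMod.isUnit_iff_coprime a (m * n)).2 ha
      have hcrt : ZMod.chineseRemainder hmn u = (a : ZMod m × ZMod n) := by rw [hu, map_natCast]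
      have hfst : (a : ZMod m) = (e u).1 := (congrArg Prod.fst hcrt).symm
      have hsnd : (a : ZMod n) = (e u).2 := (congrArg Prod.snd hcrt).symm
      have hsplit : φ (e u) = φ ((e u).1, 1) * φ (1, (e u).2) := by simp [← map_mul]
      rw [hfst, hsnd, MulChar.ofUnitHom_coe, MulChar.ofUnitHom_coe, ← Units.val_mul, ← hu]
      simpa [hφ] using congrArg Units.val hsplit
    · have hnonunit {N : ℕ} (χ : DirichletCharacter R N) (h : ¬a.Coprime N) : χ a = 0 :=
        χ.map_nonunit (mt (ZMod.isUnit_iff_coprime a N).1 h)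
      rw [hnonunit ψ ha]
      rcases not_and_or.1 (mt Nat.coprime_mul_iff_right.2 ha) with h | h
      · rw [hnonunit _ h, zero_mul]
      · rw [hnonunit _ h, mul_zero]
  · have hφk (u) : φ u ^ k = 1 := by
      ext
      rw [Units.val_pow_eq_pow_val, hφ, ← MulChar.pow_apply_coe, hk, MulChar.one_apply_coe,
        Units.val_one]
    constructor <;> ext u <;> simp [MulChar.pow_apply_coe, ← Units.val_pow_eq_pow_val, hφk]

lemma exists_dirichletCharacter_prod_of_primes {P : Finset ℕ} (hP : ∀ p ∈ P, p.Prime)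
    (ψ : DirichletCharacter R (∏ p ∈ P, p)) :
    ∃ χ : (p : ℕ) → DirichletCharacter R p,
      (∀ a : ℕ, ψ a = ∏ p ∈ P, χ p a) ∧ ∀ k, ψ ^ k = 1 → ∀ p ∈ P, χ p ^ k = 1 := by
  induction P using Finset.induction_on with
  | empty =>
    refine ⟨1, fun a ↦ ?_, by simp⟩
    rw [DirichletCharacter.level_one' ψ prod_empty, MulChar.one_apply, prod_empty]
    rw [ZMod.isUnit_iff_coprime, prod_empty]
    exact a.coprime_one_right
  | insert p P hpP ih =>
    rw [forall_mem_insert] at hP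
    revert ψ
    rw [prod_insert hpP]
    intro ψ
    obtain ⟨χ₁, χ₂, hmul, hpow⟩ :=
      exists_dirichletCharacter_mul_of_coprime (coprime_prod_of_forall_prime hP.2 hP.1 hpP) ψ
    obtain ⟨χ, hχ, hχpow⟩ := ih hP.2 χ₂
    have hupdate : ∀ q ∈ P, Function.update χ p χ₁ q = χ q := fun q hq ↦
      Function.update_of_ne (ne_of_mem_of_not_mem hq hpP) _ _
    refine ⟨Function.update χ p χ₁, fun a ↦ ?_, fun k hk ↦ ?_⟩
    · rw [hmul, hχ, prod_insert hpP, Function.update_self]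
      exact congrArg _ (prod_congr rfl fun q hq ↦ by rw [hupdate q hq])
    · rw [forall_mem_insert, Function.update_self]
      exact ⟨(hpow k hk).1, fun q hq ↦ by rw [hupdate q hq, hχpow k (hpow k hk).2 q hq]⟩

end Components

section RootsOfUnity

variable {R : Type*} [CommRing R]

lemma mk_span_sub_one_self (ζ : R) : Ideal.Quotient.mk (Ideal.span {ζ - 1}) ζ = 1 := by
  rw [← map_one (Ideal.Quotient.mk _), Ideal.Quotient.eq]
  exact Ideal.mem_span_singleton_self _

variable [IsDomain R] {n : ℕ} {ζ : R}

lemma natCast_quotient_span_sub_one_eq_zero (hζ : IsPrimitiveRoot ζ n) (hn : 1 < n) :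
    (n : R ⧸ Ideal.span {ζ - 1}) = 0 := by
  simpa [mk_span_sub_one_self] using
    congrArg (Ideal.Quotient.mk (Ideal.span {ζ - 1})) (hζ.geom_sum_eq_zero hn)

variable {M : Type*} [CommMonoid M] [NeZero n] {χ : MulChar M R}

lemma exists_pow_eq_apply_coe (hζ : IsPrimitiveRoot ζ n) (hχ : χ ^ n = 1) (u : Mˣ) :
    ∃ i : ℕ, ζ ^ i = χ u := by
  have hu : χ u ^ n = 1 := by rw [← MulChar.pow_apply_coe, hχ, MulChar.one_apply_coe]
  exact (hζ.eq_pow_of_pow_eq_one hu).imp fun _ ↦ And.right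

lemma apply_mem_closure_of_pow_eq_one (hζ : IsPrimitiveRoot ζ n) (hχ : χ ^ n = 1) (a : M) :
    χ a ∈ Subring.closure {ζ} := by
  by_cases ha : IsUnit a
  · obtain ⟨u, rfl⟩ := ha
    obtain ⟨i, hi⟩ := exists_pow_eq_apply_coe hζ hχ u
    rw [← hi]
    exact pow_mem (Subring.mem_closure_of_mem (Set.mem_singleton ζ)) i
  · rw [χ.map_nonunit ha]
    exact zero_mem _

lemma ringHomComp_mk_span_sub_one_eq_one (hζ : IsPrimitiveRoot ζ n) (hχ : χ ^ n = 1) :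
    χ.ringHomComp (Ideal.Quotient.mk (Ideal.span {ζ - 1})) = 1 := by
  ext u
  obtain ⟨i, hi⟩ := exists_pow_eq_apply_coe hζ hχ u
  rw [MulChar.ringHomComp_apply, MulChar.one_apply_coe, ← hi, map_pow, mk_span_sub_one_self,
    one_pow]

end RootsOfUnity

theorem sum_range_mem_span_sub_one_pow {R : Type*} [CommRing R] [IsDomain R] {n f : ℕ} {ζ : R}
    (hζ : IsPrimitiveRoot ζ n) (hn : 1 < n) (hf : Squarefree f)
    (hfn : ∀ p ∈ f.primeFactors, p ≡ 1 [MOD n]) {χ : DirichletCharacter R f} (hχ : χ ^ n = 1) :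
    ∑ a ∈ range f, χ a * ((a : R) ^ 2 - f * a) ∈ Ideal.span {ζ - 1} ^ (#f.primeFactors - 1) := by
  have : NeZero n := ⟨Nat.ne_zero_of_lt hn⟩
  have hprod := Nat.prod_primeFactors_of_squarefree hf
  have hP (p) (hp : p ∈ f.primeFactors) : p.Prime := Nat.prime_of_mem_primeFactors hp
  generalize f.primeFactors = P at *
  subst hprod
  obtain ⟨ψ, hψ, hψn⟩ := exists_dirichletCharacter_prod_of_primes hP χ
  simp only [hψ]
  refine stickelbergerSum_mem_pow hP (fun p hp ↦ ?_) fun p hp ↦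
    ringHomComp_mk_span_sub_one_eq_one hζ (hψn n hχ p hp)
  obtain ⟨k, hk⟩ := (Nat.modEq_iff_dvd' (hP p hp).one_le).1 (hfn p hp).symm
  rw [← Nat.sub_add_cancel (hP p hp).one_le, hk, Nat.cast_add, Nat.cast_mul,
    natCast_quotient_span_sub_one_eq_zero hζ hn, zero_mul, zero_add, Nat.cast_one]

section Conductor

lemma card_ker_unitsMap_mul_totient {d f : ℕ} [NeZero f] (hd : d ∣ f) :
    Nat.card (ZMod.unitsMap hd).ker * d.totient = f.totient := by
  have : NeZero d := ⟨ne_zero_of_dvd_ne_zero (NeZero.ne f) hd⟩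
  rw [← ZMod.card_units_eq_totient, ← ZMod.card_units_eq_totient, ← Nat.card_eq_fintype_card,
    ← Nat.card_eq_fintype_card, ← (ZMod.unitsMap hd).ker.card_mul_index, Subgroup.index_ker,
    MonoidHom.range_eq_top.2 (ZMod.unitsMap_surjective hd), Subgroup.card_top]

variable {R : Type*} [CommMonoidWithZero R] {f n : ℕ} [NeZero f] {χ : DirichletCharacter R f}

lemma factorsThrough_of_pow_eq_one_of_coprime_card_ker {d : ℕ} (hd : d ∣ f)
    (hn : (Nat.card (ZMod.unitsMap hd).ker).Coprime n) (hχ : χ ^ n = 1) :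
    χ.FactorsThrough d := by
  rw [DirichletCharacter.factorsThrough_iff_ker_unitsMap hd]
  intro u hu
  have hcard : u ^ Nat.card (ZMod.unitsMap hd).ker = 1 :=
    congrArg Subtype.val (pow_card_eq_one' (x := (⟨u, hu⟩ : (ZMod.unitsMap hd).ker)))
  rw [MonoidHom.mem_ker, ← pow_eq_one_iff_of_coprime hn, ← map_pow, hcard, map_one]
  refine ⟨rfl, Units.ext ?_⟩
  rw [Units.val_pow_eq_pow_val, MulChar.coe_toUnitHom, ← MulChar.pow_apply_coe, hχ,
    MulChar.one_apply_coe, Units.val_one]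

lemma not_coprime_card_ker_unitsMap (hprim : χ.IsPrimitive) (hχ : χ ^ n = 1) {d : ℕ} (hd : d ∣ f)
    (hdf : d ≠ f) : ¬(Nat.card (ZMod.unitsMap hd).ker).Coprime n := fun hn ↦
  hdf <| Nat.dvd_antisymm hd <| hprim ▸
    χ.conductor_dvd_of_mem_conductorSet (factorsThrough_of_pow_eq_one_of_coprime_card_ker hd hn hχ)

lemma squarefree_of_isPrimitive_of_pow_eq_one (hprim : χ.IsPrimitive) (hχ : χ ^ n = 1)
    (hn : f.Coprime n) : Squarefree f := by
  rw [Nat.squarefree_iff_prime_squarefree]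
  rintro p hp ⟨c, hc⟩
  rw [mul_assoc] at hc
  have hpos : 0 < p * c := Nat.pos_of_ne_zero fun h ↦ NeZero.ne f (by rw [hc, h, mul_zero])
  have hd : p * c ∣ f := ⟨p, by rw [hc, mul_comm]⟩
  have hcard : Nat.card (ZMod.unitsMap hd).ker = p := by
    refine Nat.eq_of_mul_eq_mul_right (Nat.totient_pos.2 hpos) ?_
    rw [card_ker_unitsMap_mul_totient, ← Nat.totient_mul_of_prime_of_dvd hp (dvd_mul_right p c), hc]
  refine not_coprime_card_ker_unitsMap hprim hχ hd ?_ ?_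
  · rw [hc]
    exact (lt_mul_of_one_lt_left hpos hp.one_lt).ne
  · rw [hcard]
    exact hn.coprime_dvd_left ⟨p * c, hc⟩

lemma not_coprime_sub_one_of_isPrimitive (hprim : χ.IsPrimitive) (hχ : χ ^ n = 1)
    (hf : Squarefree f) {p : ℕ} (hp : p.Prime) (hpf : p ∣ f) : ¬(p - 1).Coprime n := by
  obtain ⟨d, hd⟩ := hpf
  have hpos : 0 < d := Nat.pos_of_ne_zero fun h ↦ NeZero.ne f (by rw [hd, h, mul_zero])
  have hdf : d ∣ f := ⟨p, by rw [hd, mul_comm]⟩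
  have hpd : ¬p ∣ d := fun h ↦ hp.not_isUnit (hf p (hd ▸ mul_dvd_mul_left p h))
  have hcard : Nat.card (ZMod.unitsMap hdf).ker = p - 1 := by
    refine Nat.eq_of_mul_eq_mul_right (Nat.totient_pos.2 hpos) ?_
    rw [card_ker_unitsMap_mul_totient, ← Nat.totient_mul_of_prime_of_not_dvd hp hpd, hd]
  rw [← hcard]
  refine not_coprime_card_ker_unitsMap hprim hχ hdf ?_
  rw [hd]
  exact (lt_mul_of_one_lt_left hpos hp.one_lt).ne

end Conductor

section CodRestrict

variable {M R : Type*} [CommMonoid M] [CommRing R]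

/-- A multiplicative character whose values lie in a subring, seen as a character valued in that
subring. -/
def mulCharCodRestrict (χ : MulChar M R) (S : Subring R) (h : ∀ a, χ a ∈ S) : MulChar M S where
  toFun a := ⟨χ a, h a⟩
  map_one' := Subtype.ext χ.map_one
  map_mul' a b := Subtype.ext (map_mul χ a b)
  map_nonunit' _ ha := Subtype.ext (χ.map_nonunit ha)

lemma ringHomComp_mulCharCodRestrict (χ : MulChar M R) (S : Subring R) (h : ∀ a, χ a ∈ S) :
    (mulCharCodRestrict χ S h).ringHomComp S.subtype = χ := rfl

lemma mulCharCodRestrict_pow_eq_one {χ : MulChar M R}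
    {S : Subring R} (h : ∀ a, χ a ∈ S) {n : ℕ} (hχ : χ ^ n = 1) :
    mulCharCodRestrict χ S h ^ n = 1 := by
  rw [← MulChar.ringHomComp_eq_one_iff S.subtype_injective, ← MulChar.ringHomComp_pow,
    ringHomComp_mulCharCodRestrict, hχ]

end CodRestrict

section CubeRoot

section

variable {R : Type*} [CommRing R] [IsDomain R] {ω : R}

lemma one_add_self_add_sq_of_isPrimitiveRoot_three (hω : IsPrimitiveRoot ω 3) :
    1 + ω + ω ^ 2 = 0 := by
  simpa [sum_range_succ] using hω.geom_sum_eq_zero (by norm_num)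

lemma exists_eq_add_mul_of_mem_closure (hω : IsPrimitiveRoot ω 3) {α : R}
    (hα : α ∈ Subring.closure {ω}) : ∃ x y : ℤ, α = x + y * ω := by
  have hsq := one_add_self_add_sq_of_isPrimitiveRoot_three hω
  induction hα using Subring.closure_induction with
  | mem a ha => exact ⟨0, 1, by simpa using ha⟩
  | zero => exact ⟨0, 0, by simp⟩
  | one => exact ⟨1, 0, by simp⟩
  | add a b _ _ ha hb =>
    obtain ⟨⟨x, y, rfl⟩, z, w, rfl⟩ := And.intro ha hb
    exact ⟨x + z, y + w, by push_cast; ring⟩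
  | neg a _ ha =>
    obtain ⟨x, y, rfl⟩ := ha
    exact ⟨-x, -y, by push_cast; ring⟩
  | mul a b _ _ ha hb =>
    obtain ⟨⟨x, y, rfl⟩, z, w, rfl⟩ := And.intro ha hb
    exact ⟨x * z - y * w, x * w + y * z - y * w, by
      push_cast; linear_combination (y * w : R) * hsq⟩

end

variable {ω : ℂ}

lemma star_eq_sq_of_isPrimitiveRoot_three (hω : IsPrimitiveRoot ω 3) : star ω = ω ^ 2 := by
  rw [Complex.star_def, ← Complex.inv_eq_conj (hω.norm'_eq_one three_ne_zero)]
  exact inv_eq_of_mul_eq_one_right (by rw [← pow_succ', hω.pow_eq_one])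

lemma exists_mul_star_eq_intCast (hω : IsPrimitiveRoot ω 3) {α : ℂ} (hα : α ∈ Subring.closure {ω}) :
    ∃ k : ℤ, α * star α = k := by
  obtain ⟨x, y, rfl⟩ := exists_eq_add_mul_of_mem_closure hω hα
  refine ⟨x ^ 2 - x * y + y ^ 2, ?_⟩
  rw [star_add, star_mul', star_intCast, star_intCast, star_eq_sq_of_isPrimitiveRoot_three hω]
  push_cast
  linear_combination (x * y : ℂ) * one_add_self_add_sq_of_isPrimitiveRoot_three hω +
    (y ^ 2 : ℂ) * hω.pow_eq_one

lemma sub_one_mul_star_of_isPrimitiveRoot_three (hω : IsPrimitiveRoot ω 3) :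
    (ω - 1) * star (ω - 1) = 3 := by
  rw [star_sub, star_one, star_eq_sq_of_isPrimitiveRoot_three hω]
  linear_combination hω.pow_eq_one - one_add_self_add_sq_of_isPrimitiveRoot_three hω

lemma exists_mul_star_eq_three_pow_mul (hω : IsPrimitiveRoot ω 3)
    {ζ α : Subring.closure {ω}} (hζ : (ζ : ℂ) = ω) {n : ℕ} (hα : α ∈ Ideal.span {ζ - 1} ^ n) :
    ∃ k : ℤ, (α : ℂ) * star (α : ℂ) = 3 ^ n * k := by
  rw [Ideal.span_singleton_pow, Ideal.mem_span_singleton'] at hα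
  obtain ⟨β, rfl⟩ := hα
  obtain ⟨k, hk⟩ := exists_mul_star_eq_intCast hω β.2
  refine ⟨k, ?_⟩
  push_cast
  rw [← hk, ← sub_one_mul_star_of_isPrimitiveRoot_three hω, hζ, star_mul', star_pow, mul_pow]
  ring

end CubeRoot

lemma sum_Icc_one_eq_sum_range {M : Type*} [AddCommMonoid M] {f : ℕ} {h : ℕ → M}
    (hf : h f = h 0) : ∑ a ∈ Icc 1 f, h a = ∑ a ∈ range f, h a := by
  cases f with
  | zero => simp
  | succ f =>
    rw [sum_range_succ', ← hf, ← Nat.Ico_zero_eq_range, sum_Ico_add', zero_add,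
      Ico_add_one_right_eq_Icc, sum_Icc_succ_top (Nat.le_add_left 1 f)]

theorem cubic_stickelberger_int_dvd_general (f : ℕ) (hf : Squarefree f)
    (hmod : ∀ p ∈ f.primeFactors, p ≡ 1 [MOD 3]) (χ : DirichletCharacter ℂ f) (hχ : χ ^ 3 = 1) :
    ∃ z : ℤ,
      (∑ a ∈ Finset.Icc 1 f, χ (a : ZMod f) * ((a : ℂ) ^ 2 - (f : ℂ) * a)) *
        (∑ a ∈ Finset.Icc 1 f, (χ ^ 2) (a : ZMod f) * ((a : ℂ) ^ 2 - (f : ℂ) * a)) = (z : ℂ) ∧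
      (3 : ℤ) ^ (f.primeFactors.card - 1) ∣ z := by
  obtain ⟨ω, hω⟩ : ∃ ω : ℂ, IsPrimitiveRoot ω 3 :=
    ⟨_, Complex.isPrimitiveRoot_exp 3 three_ne_zero⟩
  have hmem := apply_mem_closure_of_pow_eq_one hω hχ
  let ζ : Subring.closure {ω} := ⟨ω, Subring.mem_closure_of_mem (Set.mem_singleton ω)⟩
  have hζ : IsPrimitiveRoot ζ 3 := IsPrimitiveRoot.coe_submonoidClass_iff.1 hω
  obtain ⟨k, hk⟩ := exists_mul_star_eq_three_pow_mul hω (ζ := ζ) rfl <|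
    sum_range_mem_span_sub_one_pow hζ (by norm_num) hf hmod (mulCharCodRestrict_pow_eq_one hmem hχ)
  have hconj : ∑ a ∈ range f, (χ ^ 2) a * ((a : ℂ) ^ 2 - f * a) =
      star (∑ a ∈ range f, χ a * ((a : ℂ) ^ 2 - f * a)) := by
    have hinv : χ ^ 2 = χ⁻¹ := eq_inv_of_mul_eq_one_left (by rw [← pow_succ, hχ])
    simp [hinv, ← MulChar.star_apply']
  refine ⟨3 ^ (#f.primeFactors - 1) * k, ?_, dvd_mul_right _ _⟩
  rw [sum_Icc_one_eq_sum_range (by simp [sq]), sum_Icc_one_eq_sum_range (by simp [sq]), hconj]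
  push_cast at hk ⊢
  exact hk

/-- **3-adic divisibility for cyclic cubic fields.** Let `f` be coprime to `3` and `χ` a
primitive Dirichlet character of conductor `f` and order `3`, `t` the number of prime
divisors of `f`. With `S_χ = ∑_{a=1}^{f} χ(a)(a² − f·a)`, the product `S_χ · S_{χ²}` is a
rational integer divisible by `3^(t−1)`. -/
theorem cubic_stickelberger_int_dvd
    (f : ℕ) (hf : Nat.gcd f 3 = 1) (χ : DirichletCharacter ℂ f)
    (hprim : χ.IsPrimitive) (hord : orderOf χ = 3) :
    ∃ z : ℤ,
      (∑ a ∈ Finset.Icc 1 f, χ (a : ZMod f) * ((a : ℂ) ^ 2 - (f : ℂ) * a)) *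
        (∑ a ∈ Finset.Icc 1 f, (χ ^ 2) (a : ZMod f) * ((a : ℂ) ^ 2 - (f : ℂ) * a)) = (z : ℂ) ∧
      (3 : ℤ) ^ (f.primeFactors.card - 1) ∣ z := by
  have hχ : χ ^ 3 = 1 := hord ▸ pow_orderOf_eq_one χ
  have : NeZero f := ⟨by rintro rfl; norm_num at hf⟩
  have hsf := squarefree_of_isPrimitive_of_pow_eq_one hprim hχ hf
  refine cubic_stickelberger_int_dvd_general f hsf (fun p hp ↦ ?_) χ hχ
  have hpp := Nat.prime_of_mem_primeFactors hp
  have hnot := not_coprime_sub_one_of_isPrimitive hprim hχ hsf hpp (Nat.dvd_of_mem_primeFactors hp)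
  rw [Nat.coprime_comm, Nat.prime_three.coprime_iff_not_dvd, not_not] at hnot
  exact ((Nat.modEq_iff_dvd' hpp.one_le).2 hnot).symm
end

section
/- For e ∈ {0, 1} and a subset I ⊆ {1, …, n}, the ideal 𝔭^e · ∏_{i ∈ I} 𝔩_i of ℤ[√m] is principal if and only if (e, I) is one of the four pairs (0, ∅), (0, {1, …, n}), (1, {2}), (1, {1, …, n} ∖ {2}). In particular 𝔭·𝔩₂ is principal, ∏_{i=1}^{n} 𝔩_i = (√m) is principal, and there are exactly two independent relations of principality among the classes of the ramified primes. -/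
open NumberField

/-!
By unique factorisation of ideals, an ideal `J` with `J ^ 2 = (d)` is principal exactly when `d` is
a unit times a square. For `J = 𝔭 ^ e * ∏ i ∈ I, 𝔩 i` this means that the Pell-type equation
`(∏ i ∈ I, ℓ i) x² - (∏ i ∉ I, ℓ i) y² = ± 2 ^ e` is solvable. Reducing it modulo the primes
`ℓ i ≡ 5 (mod 8)`, at which `-1` is a square and `2` is not, leaves only the four listed pairs.
Conversely, if `(a, b)` is the fundamental solution of `a² - m b² = 1`, then the factorisation
`(a + 1) (a - 1) = m b²` always yields a solvable equation other than the trivial one, and the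
reduction shows that it must be the one attached to `𝔭 𝔩₂`.
-/

/-! ### Squares in Dedekind domains and quadratic rings -/

section SquareRootIdeals

variable {R : Type*} [CommRing R] [IsDedekindDomain R]

theorem isPrincipal_iff_exists_associated_sq {J : Ideal R} {d : R} (hJ : J ^ 2 = Ideal.span {d}) :
    J.IsPrincipal ↔ ∃ g : R, Associated (g ^ 2) d := by
  have span_eq_iff (g : R) : J = Ideal.span {g} ↔ Associated (g ^ 2) d := by
    rw [← (pow_left_injective two_ne_zero).eq_iff, hJ, Ideal.span_singleton_pow,
      Ideal.span_singleton_eq_span_singleton, Associated.comm]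
  simp only [← span_eq_iff]
  exact ⟨fun ⟨g, hg⟩ => ⟨g, hg⟩, fun ⟨g, hg⟩ => ⟨g, hg⟩⟩

end SquareRootIdeals

theorem associated_map_ringEquiv_iff {R S : Type*} [Semiring R] [Semiring S] (φ : R ≃+* S)
    {a b : R} : Associated (φ a) (φ b) ↔ Associated a b :=
  ⟨fun h => by simpa only [RingEquiv.symm_apply_apply] using h.map φ.symm, fun h => h.map φ⟩

theorem zsqrtd_lift_bijective {R : Type*} [CommRing R] [CharZero R] {M : ℤ} (hM : ¬ IsSquare M)
    {α : R} (hα : α * α = M) (hgen : Algebra.adjoin ℤ {α} = ⊤) :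
    Function.Bijective (Zsqrtd.lift ⟨α, hα⟩ : ℤ√M →+* R) := by
  refine ⟨Zsqrtd.lift_injective _ fun r hr => hM ⟨r, hr⟩, fun x => ?_⟩
  have adjoin_le : Algebra.adjoin ℤ {α} ≤
      (Zsqrtd.lift ⟨α, hα⟩ : ℤ√M →+* R).toIntAlgHom.range := by
    rw [Algebra.adjoin_le_iff, Set.singleton_subset_iff]
    exact ⟨Zsqrtd.sqrtd, by simp⟩
  exact adjoin_le (hgen ▸ Algebra.mem_top)

theorem zsqrtd_associated_of_dvd_of_norm {M : ℤ} {g h : ℤ√M} (hdvd : g ∣ h) (hg : g.norm ≠ 0)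
    (hnorm : Associated g.norm h.norm) : Associated g h := by
  obtain ⟨u, rfl⟩ := hdvd
  have hu : IsUnit u.norm := by
    rw [Zsqrtd.norm_mul] at hnorm
    exact isUnit_of_associated_mul hnorm.symm hg
  exact (associated_mul_unit_left g u ((Zsqrtd.isUnit_iff_norm_isUnit u).2 hu)).symm

theorem zsqrtd_norm_associated_of_sq_associated_intCast {M n : ℤ} {g : ℤ√M}
    (h : Associated (g ^ 2) (n : ℤ√M)) : Associated g.norm n := by
  have hsq : Associated (g ^ 2).norm (n : ℤ√M).norm := h.map Zsqrtd.normMonoidHom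
  rw [sq, Zsqrtd.norm_mul, Zsqrtd.norm_intCast, ← sq, ← sq, Int.associated_iff_natAbs,
    Int.natAbs_pow, Int.natAbs_pow] at hsq
  exact Int.associated_iff_natAbs.2 (Nat.pow_left_injective two_ne_zero hsq)

theorem exists_pell_of_exists_associated_sq {D D' M t : ℤ} (hM : D * D' = M) (hD : Squarefree D)
    (h : ∃ g : ℤ√M, Associated (g ^ 2) ((t * D : ℤ) : ℤ√M)) :
    ∃ x y : ℤ, Associated (D * x ^ 2 - D' * y ^ 2) t := by
  subst hM
  obtain ⟨⟨a, b⟩, hg⟩ := h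
  have hnorm : Associated (a * a - D * D' * b * b) (t * D) :=
    zsqrtd_norm_associated_of_sq_associated_intCast hg
  obtain ⟨x, rfl⟩ : D ∣ a := by
    rw [← hD.dvd_pow_iff_dvd two_ne_zero, sq,
      ← dvd_sub_left (c := D * D' * b * b) ⟨D' * b * b, by ring⟩]
    exact (Dvd.intro_left t rfl).trans hnorm.dvd'
  refine ⟨x, b, Associated.of_mul_left (a := D) (c := D) ?_ (Associated.refl D) hD.ne_zero⟩
  rwa [mul_comm D t, show D * (D * x ^ 2 - D' * b ^ 2) = D * x * (D * x) - D * D' * b * b by ring]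

theorem exists_associated_sq_of_exists_pell {D D' M t : ℤ} (hM : D * D' = M) (hD : D ≠ 0)
    (ht : t ∣ 2) (h : ∃ x y : ℤ, Associated (D * x ^ 2 - D' * y ^ 2) t) :
    ∃ g : ℤ√M, Associated (g ^ 2) ((t * D : ℤ) : ℤ√M) := by
  subst hM
  obtain ⟨x, y, hxy⟩ := h
  let g : ℤ√(D * D') := ⟨D * x, y⟩
  have norm_g : g.norm = D * (D * x ^ 2 - D' * y ^ 2) := by
    rw [Zsqrtd.norm_def]; ring
  have ht0 : t ≠ 0 := ne_zero_of_dvd_ne_zero two_ne_zero ht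
  have dvd_sq : ((t * D : ℤ) : ℤ√(D * D')) ∣ g ^ 2 := by
    obtain ⟨k, hk⟩ := ht
    obtain ⟨s, hs⟩ := hxy.dvd'
    rw [Zsqrtd.intCast_dvd, sq, Zsqrtd.re_mul, Zsqrtd.im_mul]
    refine ⟨⟨s + k * D' * y ^ 2, ?_⟩, ⟨k * x * y, ?_⟩⟩
    · linear_combination D * hs + D * D' * y ^ 2 * hk
    · linear_combination D * x * y * hk
  refine ⟨g, (zsqrtd_associated_of_dvd_of_norm dvd_sq ?_ ?_).symm⟩
  · rw [Zsqrtd.norm_intCast]; positivity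
  · rw [Zsqrtd.norm_intCast, sq g, Zsqrtd.norm_mul, norm_g, mul_comm t]
    have := hxy.symm.mul_left D
    exact this.mul_mul this

/-! ### Pell equations attached to a splitting -/

/-- The Pell-type equation `(∏ i ∈ I, l i) x² - (∏ i ∉ I, l i) y² = ± t` has an integral solution.
The ambiguous sign is expressed by `Associated`. -/
def SplitPellSolvable {ι : Type*} [Fintype ι] [DecidableEq ι] (l : ι → ℕ) (t : ℤ)
    (I : Finset ι) : Prop :=
  ∃ x y : ℤ, Associated ((∏ i ∈ I, (l i : ℤ)) * x ^ 2 - (∏ i ∈ Iᶜ, (l i : ℤ)) * y ^ 2) t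

namespace SplitPellSolvable

variable {ι : Type*} [Fintype ι] [DecidableEq ι] {l : ι → ℕ} {t : ℤ} {I : Finset ι}

theorem compl (h : SplitPellSolvable l t I) : SplitPellSolvable l t Iᶜ := by
  obtain ⟨x, y, hxy⟩ := h
  refine ⟨y, x, ?_⟩
  rwa [compl_compl, ← neg_sub, Associated.neg_left_iff]

theorem compl_iff : SplitPellSolvable l t Iᶜ ↔ SplitPellSolvable l t I :=
  ⟨fun h => compl_compl I ▸ h.compl, compl⟩

theorem one_empty : SplitPellSolvable l 1 ∅ :=
  ⟨1, 0, by simp⟩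

end SplitPellSolvable

theorem even_of_four_dvd_squarefree_mul_sq {M b : ℤ} (hM : Squarefree M) (h : 4 ∣ M * b ^ 2) :
    Even b := by
  by_contra hb
  have hcop : IsCoprime (2 ^ 2 : ℤ) (b ^ 2) :=
    (Int.isCoprime_two_left.2 (Int.not_even_iff_odd.1 hb)).pow
  have two_unit : IsUnit (2 : ℤ) := hM 2 (hcop.dvd_of_dvd_mul_right h)
  exact Int.prime_two.not_isUnit two_unit

theorem not_dvd_sq_add_one_of_mod_four_eq_three {p : ℕ} (hp : p.Prime) (hmod : p % 4 = 3) (y : ℤ) :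
    ¬ (p : ℤ) ∣ y ^ 2 + 1 := by
  have := Fact.mk hp
  rw [← ZMod.intCast_zmod_eq_zero_iff_dvd]
  push_cast
  exact fun h => ZMod.mod_four_ne_three_of_sq_eq_neg_one (eq_neg_of_add_eq_zero_left h) hmod

section PrimeFamilies

variable {ι : Type*} {l : ι → ℕ}

theorem pairwise_isCoprime_of_primes (hl : ∀ i, (l i).Prime) (hinj : l.Injective) :
    Pairwise (IsCoprime.onFun fun i => (l i : ℤ)) := fun i j hij =>
  Nat.isCoprime_iff_coprime.2 ((Nat.coprime_primes (hl i) (hl j)).2 (hinj.ne hij))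

theorem squarefree_prod_of_primes (hl : ∀ i, (l i).Prime) (hinj : l.Injective) (s : Finset ι) :
    Squarefree (∏ i ∈ s, (l i : ℤ)) :=
  Finset.squarefree_prod_of_pairwise_isCoprime
    (fun _ _ _ _ hij => (pairwise_isCoprime_of_primes hl hinj hij).isRelPrime)
    fun i _ => (Nat.prime_iff_prime_int.1 (hl i)).squarefree

theorem prod_primes_pos (hl : ∀ i, (l i).Prime) (s : Finset ι) : 0 < ∏ i ∈ s, (l i : ℤ) :=
  Finset.prod_pos fun i _ => Nat.cast_pos.2 (hl i).pos

variable [Fintype ι]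

theorem not_isSquare_prod_of_primes [Nonempty ι] (hl : ∀ i, (l i).Prime) (hinj : l.Injective) :
    ¬ IsSquare (∏ i, (l i : ℤ)) := by
  rintro ⟨r, hr⟩
  have hunit : IsUnit (∏ i, (l i : ℤ)) := by
    have hru : IsUnit r := squarefree_prod_of_primes hl hinj Finset.univ r (by rw [hr])
    exact hr ▸ hru.mul hru
  obtain ⟨i⟩ := ‹Nonempty ι›
  exact (Nat.prime_iff_prime_int.1 (hl i)).not_isUnit
    (isUnit_of_dvd_unit (Finset.dvd_prod_of_mem (fun i => (l i : ℤ)) (Finset.mem_univ i)) hunit)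

variable [DecidableEq ι]

theorem exists_splitting_of_mul_eq_prod_mul_sq (hl : ∀ i, (l i).Prime) (hinj : l.Injective)
    {A B c : ℤ} (hA : 0 < A) (hB : 0 < B) (hAB : IsCoprime A B)
    (h : A * B = (∏ i, (l i : ℤ)) * c ^ 2) :
    ∃ (I : Finset ι) (x y : ℤ),
      A = (∏ i ∈ I, (l i : ℤ)) * x ^ 2 ∧ B = (∏ i ∈ Iᶜ, (l i : ℤ)) * y ^ 2 := by
  have hcop := pairwise_isCoprime_of_primes hl hinj
  obtain ⟨I, mem_I⟩ : ∃ I : Finset ι, ∀ i, i ∈ I ↔ (l i : ℤ) ∣ A :=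
    ⟨Finset.univ.filter fun i => (l i : ℤ) ∣ A, by simp⟩
  obtain ⟨A', rfl⟩ : ∏ i ∈ I, (l i : ℤ) ∣ A :=
    Finset.prod_dvd_of_coprime (hcop.set_pairwise _) fun i hi => (mem_I i).1 hi
  obtain ⟨B', rfl⟩ : ∏ i ∈ Iᶜ, (l i : ℤ) ∣ B := by
    refine Finset.prod_dvd_of_coprime (hcop.set_pairwise _) fun i hi => ?_
    have dvd_mul := h ▸
      (Finset.dvd_prod_of_mem (fun i => (l i : ℤ)) (Finset.mem_univ i)).mul_right (c ^ 2)
    exact ((Nat.prime_iff_prime_int.1 (hl i)).dvd_or_dvd dvd_mul).resolve_left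
      (mt (mem_I i).2 (Finset.mem_compl.1 hi))
  have hA' : 0 < A' := pos_of_mul_pos_right hA (prod_primes_pos hl I).le
  have hB' : 0 < B' := pos_of_mul_pos_right hB (prod_primes_pos hl Iᶜ).le
  have hcop' : IsCoprime A' B' := hAB.of_mul_left_right.of_mul_right_right
  have hsq : A' * B' = c ^ 2 := by
    refine mul_left_cancel₀ (prod_primes_pos hl Finset.univ).ne' (Eq.trans ?_ h)
    rw [← Finset.prod_mul_prod_compl I]
    ring
  obtain ⟨x, hx⟩ := Int.sq_of_isCoprime hcop' hsq
  obtain ⟨y, hy⟩ := Int.sq_of_isCoprime hcop'.symm (mul_comm A' B' ▸ hsq)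
  exact ⟨I, x, y, by rw [hx.resolve_right (by nlinarith [sq_nonneg x])],
    by rw [hy.resolve_right (by nlinarith [sq_nonneg y])]⟩

theorem exists_splitPellSolvable_two_of_even (hl : ∀ i, (l i).Prime) (hinj : l.Injective)
    {a b : ℤ} (ha : 1 < a) (heven : Even a) (hab : a ^ 2 - (∏ i, (l i : ℤ)) * b ^ 2 = 1) :
    ∃ I, SplitPellSolvable l 2 I := by
  have hcop : IsCoprime (a + 1) (a - 1) := by
    obtain ⟨k, rfl⟩ := heven
    exact ⟨k, -(k + 1), by ring⟩
  obtain ⟨I, x, y, hx, hy⟩ := exists_splitting_of_mul_eq_prod_mul_sq hl hinj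
    (by lia) (by lia) hcop (c := b) (by linear_combination hab)
  exact ⟨I, x, y, by rw [← hx, ← hy, add_sub_sub_cancel, one_add_one_eq_two]⟩

theorem exists_splitting_of_odd (hl : ∀ i, (l i).Prime) (hinj : l.Injective)
    {a b : ℤ} (ha : 1 < a) (hodd : Odd a) (hab : a ^ 2 - (∏ i, (l i : ℤ)) * b ^ 2 = 1) :
    ∃ (I : Finset ι) (x y : ℤ), a + 1 = 2 * ((∏ i ∈ I, (l i : ℤ)) * x ^ 2) ∧
      a - 1 = 2 * ((∏ i ∈ Iᶜ, (l i : ℤ)) * y ^ 2) := by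
  obtain ⟨k, rfl⟩ := hodd
  obtain ⟨c, rfl⟩ : Even b :=
    even_of_four_dvd_squarefree_mul_sq (squarefree_prod_of_primes hl hinj Finset.univ)
      ⟨k ^ 2 + k, by linear_combination -hab⟩
  obtain ⟨I, x, y, hx, hy⟩ := exists_splitting_of_mul_eq_prod_mul_sq (A := k + 1) (B := k) hl hinj
    (by lia) (by lia) ⟨1, -1, by ring⟩ (c := c) (by linarith)
  exact ⟨I, x, y, by rw [← hx]; ring, by rw [← hy]; ring⟩

theorem exists_nontrivial_splitPellSolvable (hl : ∀ i, (l i).Prime) (hinj : l.Injective) {z : ι}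
    (hz : l z % 4 = 3) : (∃ I, SplitPellSolvable l 2 I) ∨
      ∃ I, I ≠ ∅ ∧ I ≠ Finset.univ ∧ SplitPellSolvable l 1 I := by
  have : Nonempty ι := ⟨z⟩
  obtain ⟨f, one_lt, -, minimal⟩ := Pell.IsFundamental.exists_of_not_isSquare
    (prod_primes_pos hl Finset.univ) (not_isSquare_prod_of_primes hl hinj)
  rcases Int.even_or_odd f.x with heven | hodd
  · exact .inl (exists_splitPellSolvable_two_of_even hl hinj one_lt heven f.prop)
  obtain ⟨I, x, y, hx, hy⟩ := exists_splitting_of_odd hl hinj one_lt hodd f.prop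
  have hxy : (∏ i ∈ I, (l i : ℤ)) * x ^ 2 - (∏ i ∈ Iᶜ, (l i : ℤ)) * y ^ 2 = 1 := by linarith
  refine .inr ⟨I, ?_, ?_, x, y, by rw [hxy]⟩
  · rintro rfl
    simp only [Finset.prod_empty, one_mul, Finset.compl_empty] at hx hxy
    have one_lt_abs : 1 < |x| := (one_lt_sq_iff_one_lt_abs x).1 (by lia)
    have := minimal (b := .mk |x| y (by rwa [sq_abs])) one_lt_abs
    rw [Pell.Solution₁.x_mk] at this
    nlinarith [sq_abs x]
  · rintro rfl
    rw [Finset.compl_univ, Finset.prod_empty, one_mul] at hxy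
    refine not_dvd_sq_add_one_of_mod_four_eq_three (hl z) hz y ?_
    rw [← sub_eq_iff_eq_add'.1 hxy]
    exact (Finset.dvd_prod_of_mem (fun i => (l i : ℤ)) (Finset.mem_univ z)).mul_right _

end PrimeFamilies

/-! ### Residue symbols of splittings -/

theorem jacobiSym_prod_left {ι : Type*} (f : ι → ℤ) (s : Finset ι) (b : ℕ) :
    jacobiSym (∏ i ∈ s, f i) b = ∏ i ∈ s, jacobiSym (f i) b := by
  classical
  induction s using Finset.induction_on with
  | empty => simp
  | insert a s ha ih => rw [Finset.prod_insert ha, Finset.prod_insert ha, jacobiSym.mul_left, ih]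

theorem jacobiSym_eq_of_dvd_mul_sq_sub {p : ℕ} {A y c : ℤ} (h : (p : ℤ) ∣ A * y ^ 2 - c)
    (hc : jacobiSym c p ≠ 0) : jacobiSym A p = jacobiSym c p := by
  have hcongr : jacobiSym A p * jacobiSym y p ^ 2 = jacobiSym c p := by
    rw [← jacobiSym.pow_left, ← jacobiSym.mul_left]
    exact jacobiSym.mod_left' (Int.emod_eq_emod_iff_emod_sub_eq_zero.2 (Int.emod_eq_zero_of_dvd h))
  have hy : jacobiSym y p ≠ 0 := fun hy => hc (by rw [← hcongr, hy, zero_pow two_ne_zero, mul_zero])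
  rcases (jacobiSym.trichotomy y p).resolve_left hy with hy | hy <;> simpa [hy] using hcongr

theorem jacobiSym_of_associated_two_pow {p : ℕ} (hp : p % 8 = 5) {e : ℕ} {c : ℤ}
    (hc : Associated c (2 ^ e)) : jacobiSym c p = (-1) ^ e := by
  have hodd : Odd p := Nat.odd_iff.2 (by lia)
  have at_two : jacobiSym 2 p = -1 := by
    rw [jacobiSym.at_two hodd, ZMod.χ₈_nat_eq_if_mod_eight, if_neg (by lia), if_neg (by lia)]
  have at_neg (a : ℤ) : jacobiSym (-a) p = jacobiSym a p := by
    rw [jacobiSym.neg a hodd, ZMod.χ₄_nat_one_mod_four (by lia), one_mul]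
  rcases Int.associated_iff.1 hc with rfl | rfl
  · rw [jacobiSym.pow_left, at_two]
  · rw [at_neg, jacobiSym.pow_left, at_two]

namespace SplitPellSolvable

variable {ι : Type*} [Fintype ι] [DecidableEq ι] {l : ι → ℕ} {e : ℕ} {I : Finset ι}

theorem jacobiSym_prod_of_notMem (h : SplitPellSolvable l (2 ^ e) I) {j : ι} (hj : j ∉ I)
    (hmod : l j % 8 = 5) : jacobiSym (∏ i ∈ I, (l i : ℤ)) (l j) = (-1) ^ e := by
  obtain ⟨x, y, hxy⟩ := h
  rw [← jacobiSym_of_associated_two_pow hmod hxy]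
  apply jacobiSym_eq_of_dvd_mul_sq_sub (y := x)
  · rw [sub_sub_cancel]
    exact (Finset.dvd_prod_of_mem (fun i => (l i : ℤ)) (Finset.mem_compl.2 hj)).mul_right _
  · rw [jacobiSym_of_associated_two_pow hmod hxy]
    exact pow_ne_zero e (by norm_num)

theorem jacobiSym_prod_compl_of_mem (h : SplitPellSolvable l (2 ^ e) I) {j : ι} (hj : j ∈ I)
    (hmod : l j % 8 = 5) : jacobiSym (∏ i ∈ Iᶜ, (l i : ℤ)) (l j) = (-1) ^ e :=
  h.compl.jacobiSym_prod_of_notMem (Finset.notMem_compl.2 hj) hmod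

end SplitPellSolvable

/-- A family of primes `l` with distinguished members `l z` and `l w` as considered by Deng and Li:
`z` and `w` are the indices `1` and `2` of the paper. The congruence at `z` is modulo `4`, where
the paper has `l z ≡ 3 (mod 8)`. -/
structure IsDengLiFamily {ι : Type*} [Fintype ι] (l : ι → ℕ) (z w : ι) : Prop where
  even_card : Even (Fintype.card ι)
  prime (i : ι) : (l i).Prime
  mod_four : l z % 4 = 3
  mod_eight {i : ι} (hi : i ≠ z) : l i % 8 = 5
  jacobiSym_eq_neg_one : jacobiSym (l z) (l w) = -1
  jacobiSym_eq_one {j : ι} (hz : j ≠ z) (hw : j ≠ w) : jacobiSym (l z) (l j) = 1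
  jacobiSym_pair {i j : ι} (hi : i ≠ z) (hj : j ≠ z) (hij : i ≠ j) : jacobiSym (l i) (l j) = -1

namespace IsDengLiFamily

variable {ι : Type*} [Fintype ι] {l : ι → ℕ} {z w : ι}

theorem ne (h : IsDengLiFamily l z w) : w ≠ z := by
  rintro rfl
  have := h.jacobiSym_eq_neg_one
  rw [jacobiSym.eq_zero_iff.2 ⟨(h.prime w).ne_zero, by simpa using (h.prime w).ne_one⟩] at this
  norm_num at this

theorem injective (h : IsDengLiFamily l z w) : l.Injective := by
  have mod_four_ne {i : ι} (hi : i ≠ z) : l i ≠ l z := fun heq => by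
    have := h.mod_eight hi
    have := h.mod_four
    lia
  intro i j heq
  by_contra hij
  by_cases hi : i = z
  · exact mod_four_ne (hi ▸ Ne.symm hij) (hi ▸ heq.symm)
  by_cases hj : j = z
  · exact mod_four_ne hi (hj ▸ heq)
  have := h.jacobiSym_pair hi hj hij
  rw [heq, jacobiSym.eq_zero_iff.2 ⟨(h.prime j).ne_zero, by simpa using (h.prime j).ne_one⟩] at this
  norm_num at this

theorem jacobiSym_prod (h : IsDengLiFamily l z w) {s : Finset ι} {j : ι} (hz : z ∉ s) (hj : j ≠ z)
    (hjs : j ∉ s) : jacobiSym (∏ i ∈ s, (l i : ℤ)) (l j) = (-1) ^ s.card := by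
  rw [jacobiSym_prod_left, ← Finset.prod_const]
  exact Finset.prod_congr rfl fun i hi =>
    h.jacobiSym_pair (ne_of_mem_of_not_mem hi hz) hj (ne_of_mem_of_not_mem hi hjs)

variable [DecidableEq ι] {e : ℕ} {I : Finset ι}

theorem jacobiSym_prod_compl (h : IsDengLiFamily l z w) (hz : z ∉ I) {j : ι} (hj : j ∈ I) :
    jacobiSym (∏ i ∈ Iᶜ, (l i : ℤ)) (l j) = -jacobiSym (l z) (l j) * (-1) ^ I.card := by
  have hzc : z ∈ Iᶜ := Finset.mem_compl.2 hz
  have hodd : Odd (I.card + (Iᶜ.erase z).card) := by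
    rw [← Nat.not_even_iff_odd, ← Nat.even_add_one, add_assoc, Finset.card_erase_add_one hzc,
      Finset.card_add_card_compl]
    exact h.even_card
  have hparity : (-1 : ℤ) ^ (Iᶜ.erase z).card = -(-1) ^ I.card := by
    have hmul : (-1 : ℤ) ^ (I.card + (Iᶜ.erase z).card) = -1 := hodd.neg_one_pow
    rw [pow_add] at hmul
    rcases neg_one_pow_eq_or ℤ I.card with hI | hI <;> rw [hI] at hmul ⊢ <;> linarith
  rw [← Finset.mul_prod_erase _ _ hzc, jacobiSym.mul_left,
    h.jacobiSym_prod (Finset.notMem_erase z _) (ne_of_mem_of_not_mem hj hz) (by simp [hj]), hparity]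
  ring

theorem eq_of_splitPellSolvable_of_notMem (h : IsDengLiFamily l z w) (hz : z ∉ I)
    (hI : SplitPellSolvable l (2 ^ e) I) : (Even e ∧ I = ∅) ∨ (Odd e ∧ I = {w}) := by
  have hsign : (-1 : ℤ) ^ I.card = (-1) ^ e := by
    by_cases hw : w ∈ I
    · rw [← hI.jacobiSym_prod_compl_of_mem hw (h.mod_eight h.ne), h.jacobiSym_prod_compl hz hw,
        h.jacobiSym_eq_neg_one, neg_neg, one_mul]
    · rw [← hI.jacobiSym_prod_of_notMem hw (h.mod_eight h.ne), h.jacobiSym_prod hz h.ne hw]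
  have hsub : I ⊆ {w} := by
    intro j hj
    rw [Finset.mem_singleton]
    by_contra hjw
    have hjz : j ≠ z := ne_of_mem_of_not_mem hj hz
    have hneg := hI.jacobiSym_prod_compl_of_mem hj (h.mod_eight hjz)
    rw [h.jacobiSym_prod_compl hz hj, h.jacobiSym_eq_one hjz hjw, ← hsign] at hneg
    exact pow_ne_zero I.card (by norm_num : (-1 : ℤ) ≠ 0) (by linarith)
  rcases Finset.subset_singleton_iff.1 hsub with rfl | rfl
  · exact .inl ⟨(neg_one_pow_eq_one_iff_even (by norm_num)).1 hsign.symm, rfl⟩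
  · exact .inr ⟨neg_one_pow_eq_neg_one_iff_odd (by norm_num) |>.1 hsign.symm, rfl⟩

theorem eq_of_splitPellSolvable (h : IsDengLiFamily l z w) (hI : SplitPellSolvable l (2 ^ e) I) :
    (Even e ∧ (I = ∅ ∨ I = Finset.univ)) ∨ (Odd e ∧ (I = {w} ∨ I = Finset.univ \ {w})) := by
  by_cases hz : z ∈ I
  · rcases h.eq_of_splitPellSolvable_of_notMem (Finset.notMem_compl.2 hz) hI.compl with
      ⟨he, hempty⟩ | ⟨he, hsingleton⟩
    · exact .inl ⟨he, .inr ((Finset.compl_eq_empty_iff I).1 hempty)⟩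
    · exact .inr ⟨he, .inr (by rw [← Finset.compl_eq_univ_sdiff, ← hsingleton, compl_compl])⟩
  · exact (h.eq_of_splitPellSolvable_of_notMem hz hI).imp (And.imp_right .inl) (And.imp_right .inl)

theorem splitPellSolvable_two_singleton (h : IsDengLiFamily l z w) :
    SplitPellSolvable l 2 {w} := by
  rcases exists_nontrivial_splitPellSolvable h.prime h.injective h.mod_four with
    ⟨I, hI⟩ | ⟨I, ne_empty, ne_univ, hI⟩
  · rcases h.eq_of_splitPellSolvable (e := 1) hI with ⟨he, -⟩ | ⟨-, rfl | rfl⟩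
    · exact absurd he Nat.not_even_one
    · exact hI
    · rwa [← Finset.compl_eq_univ_sdiff, SplitPellSolvable.compl_iff] at hI
  · rcases h.eq_of_splitPellSolvable (e := 0) hI with ⟨-, rfl | rfl⟩ | ⟨he, -⟩
    · exact absurd rfl ne_empty
    · exact absurd rfl ne_univ
    · exact absurd he Nat.not_odd_zero

theorem splitPellSolvable_iff (h : IsDengLiFamily l z w) (he : e ≤ 1) :
    SplitPellSolvable l (2 ^ e) I ↔
      (e = 0 ∧ I = ∅) ∨ (e = 0 ∧ I = Finset.univ) ∨
        (e = 1 ∧ I = {w}) ∨ (e = 1 ∧ I = Finset.univ \ {w}) := by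
  refine ⟨fun hI => ?_, ?_⟩
  · have := h.eq_of_splitPellSolvable hI
    interval_cases e <;> simpa using this
  · rintro (⟨rfl, rfl⟩ | ⟨rfl, rfl⟩ | ⟨rfl, rfl⟩ | ⟨rfl, rfl⟩)
    · exact SplitPellSolvable.one_empty
    · exact Finset.compl_empty (α := ι) ▸ SplitPellSolvable.one_empty.compl
    · exact h.splitPellSolvable_two_singleton
    · exact Finset.compl_eq_univ_sdiff {w} ▸ h.splitPellSolvable_two_singleton.compl

end IsDengLiFamily

/-! ### Ideals above ramified primes -/

section RamifiedIdeals

variable {R : Type*} [CommRing R] {ι : Type*} {l : ι → ℕ} {P : Ideal R} {L : ι → Ideal R}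

theorem sq_prod_eq_span (hL : ∀ i, L i ^ 2 = Ideal.span {(l i : R)}) (I : Finset ι) :
    (∏ i ∈ I, L i) ^ 2 = Ideal.span {∏ i ∈ I, (l i : R)} := by
  rw [← Finset.prod_pow, Finset.prod_congr rfl fun i _ => hL i, Ideal.prod_span_singleton]

theorem sq_pow_mul_prod_eq_span (hP : P ^ 2 = Ideal.span {2})
    (hL : ∀ i, L i ^ 2 = Ideal.span {(l i : R)}) (e : ℕ) (I : Finset ι) :
    (P ^ e * ∏ i ∈ I, L i) ^ 2 = Ideal.span {((2 ^ e * ∏ i ∈ I, (l i : ℤ) : ℤ) : R)} := by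
  rw [mul_pow, sq_prod_eq_span hL, pow_right_comm, hP, Ideal.span_singleton_pow,
    Ideal.span_singleton_mul_span_singleton]
  push_cast
  rfl

variable [IsDedekindDomain R] [Fintype ι] {α : R}

theorem prod_eq_span_sqrt (hα : α ^ 2 = ∏ i, (l i : R))
    (hL : ∀ i, L i ^ 2 = Ideal.span {(l i : R)}) : ∏ i, L i = Ideal.span {α} := by
  apply pow_left_injective two_ne_zero
  simp only [sq_prod_eq_span hL, Ideal.span_singleton_pow, hα]

theorem isPrincipal_iff_splitPellSolvable [CharZero R] [Nonempty ι] [DecidableEq ι]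
    (hl : ∀ i, (l i).Prime) (hinj : l.Injective) (hα : α ^ 2 = ∏ i, (l i : R))
    (hgen : Algebra.adjoin ℤ {α} = ⊤) (hP : P ^ 2 = Ideal.span {2})
    (hL : ∀ i, L i ^ 2 = Ideal.span {(l i : R)}) {e : ℕ} (he : e ≤ 1) (I : Finset ι) :
    (P ^ e * ∏ i ∈ I, L i).IsPrincipal ↔ SplitPellSolvable l (2 ^ e) I := by
  have hα' : α * α = ((∏ i, (l i : ℤ) : ℤ) : R) := by rw [← sq, hα]; push_cast; rfl
  let φ : ℤ√(∏ i, (l i : ℤ)) ≃+* R := RingEquiv.ofBijective (Zsqrtd.lift ⟨α, hα'⟩)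
    (zsqrtd_lift_bijective (not_isSquare_prod_of_primes hl hinj) hα' hgen)
  have hsqf := squarefree_prod_of_primes hl hinj I
  have hsplit := Finset.prod_mul_prod_compl I fun i => (l i : ℤ)
  have two_pow_dvd : (2 : ℤ) ^ e ∣ 2 := by simpa only [pow_one] using pow_dvd_pow (2 : ℤ) he
  rw [isPrincipal_iff_exists_associated_sq (sq_pow_mul_prod_eq_span hP hL e I),
    φ.surjective.exists]
  simp only [← map_intCast φ, ← map_pow, associated_map_ringEquiv_iff]
  exact ⟨exists_pell_of_exists_associated_sq hsplit hsqf,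
    exists_associated_sq_of_exists_pell hsplit hsqf.ne_zero two_pow_dvd⟩

end RamifiedIdeals

theorem dengLi_principal_relations_general {ι : Type*} [Fintype ι] [DecidableEq ι] {l : ι → ℕ}
    {z w : ι} (h : IsDengLiFamily l z w) {R : Type*} [CommRing R] [IsDedekindDomain R] [CharZero R]
    {α : R} (hα : α ^ 2 = ∏ i, (l i : R)) (hgen : Algebra.adjoin ℤ {α} = ⊤)
    {P : Ideal R} (hP : P ^ 2 = Ideal.span {2})
    {L : ι → Ideal R} (hL : ∀ i, L i ^ 2 = Ideal.span {(l i : R)}) :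
    (∀ e : ℕ, e ≤ 1 → ∀ I : Finset ι,
      (P ^ e * ∏ i ∈ I, L i).IsPrincipal ↔
        ((e = 0 ∧ I = ∅) ∨ (e = 0 ∧ I = Finset.univ) ∨
          (e = 1 ∧ I = {w}) ∨ (e = 1 ∧ I = Finset.univ \ {w}))) ∧
    ∏ i, L i = Ideal.span {α} := by
  have : Nonempty ι := ⟨z⟩
  refine ⟨fun e he I => ?_, prod_eq_span_sqrt hα hL⟩
  rw [isPrincipal_iff_splitPellSolvable h.prime h.injective hα hgen hP hL he,
    h.splitPellSolvable_iff he]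

theorem isDengLiFamily_fin {n : ℕ} (hn : 2 ≤ n) (hneven : Even n) {l : Fin n → ℕ}
    (hlp : ∀ i, (l i).Prime) (hl1 : l ⟨0, by lia⟩ % 4 = 3)
    (hli : ∀ i : Fin n, i ≠ ⟨0, by lia⟩ → l i % 8 = 5)
    (hleg12 : jacobiSym (l ⟨0, by lia⟩) (l ⟨1, by lia⟩) = -1)
    (hleg1j : ∀ j : Fin n, 2 ≤ (j : ℕ) → jacobiSym (l ⟨0, by lia⟩) (l j) = 1)
    (hlegij : ∀ i j : Fin n, 1 ≤ (i : ℕ) → i < j → jacobiSym (l i) (l j) = -1) :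
    IsDengLiFamily l ⟨0, by lia⟩ ⟨1, by lia⟩ where
  even_card := by rwa [Fintype.card_fin]
  prime := hlp
  mod_four := hl1
  mod_eight := hli _
  jacobiSym_eq_neg_one := hleg12
  jacobiSym_eq_one hz hw := hleg1j _ (by grind)
  jacobiSym_pair {i j} hi hj hij := by
    rcases lt_or_gt_of_ne hij with hlt | hgt
    · exact hlegij i j (by grind) hlt
    · have hi5 := hli i hi
      have hj5 := hli j hj
      rw [jacobiSym.quadratic_reciprocity_one_mod_four (by lia) (Nat.odd_iff.2 (by lia))]
      exact hlegij j i (by grind) hgt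

/-- **Deng–Li family: principality relations among ramified primes.** For `e ∈ {0,1}` and
`I ⊆ {1,…,n}`, the ideal `𝔭^e·∏_{i∈I} 𝔩_i` is principal exactly for the four pairs
`(0, ∅)`, `(0, {1,…,n})`, `(1, {2})`, `(1, {1,…,n}∖{2})`; moreover `∏ᵢ 𝔩_i = (√m)`. -/
theorem dengLi_principal_relations
    (n : ℕ) (hn : 2 ≤ n) (hneven : Even n)
    (l : Fin n → ℕ) (hlp : ∀ i, (l i).Prime) (hlinj : Function.Injective l)
    (hl1 : l ⟨0, by omega⟩ % 8 = 3)
    (hli : ∀ i : Fin n, i ≠ ⟨0, by omega⟩ → l i % 8 = 5)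
    (hleg12 : jacobiSym (l ⟨0, by omega⟩ : ℤ) (l ⟨1, by omega⟩) = -1)
    (hleg1j : ∀ j : Fin n, 2 ≤ (j : ℕ) → jacobiSym (l ⟨0, by omega⟩ : ℤ) (l j) = 1)
    (hlegij : ∀ i j : Fin n, 1 ≤ (i : ℕ) → i < j → jacobiSym (l i : ℤ) (l j) = -1)
    (m : ℕ) (hm : m = ∏ i, l i)
    (K : Type) [Field K] [NumberField K] (hdeg : Module.finrank ℚ K = 2)
    (α : 𝓞 K) (hα : α ^ 2 = (m : 𝓞 K)) (hgen : Algebra.adjoin ℤ {α} = ⊤)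
    (P : Ideal (𝓞 K)) (hP : P.IsPrime) (hP2 : P ^ 2 = Ideal.span {(2 : 𝓞 K)})
    (L : Fin n → Ideal (𝓞 K)) (hL : ∀ i, (L i).IsPrime)
    (hL2 : ∀ i, (L i) ^ 2 = Ideal.span {((l i : ℕ) : 𝓞 K)}) :
    (∀ (e : ℕ), e ≤ 1 → ∀ I : Finset (Fin n),
      (P ^ e * ∏ i ∈ I, L i).IsPrincipal ↔
        ((e = 0 ∧ I = ∅) ∨ (e = 0 ∧ I = Finset.univ) ∨
          (e = 1 ∧ I = {(⟨1, by omega⟩ : Fin n)}) ∨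
          (e = 1 ∧ I = Finset.univ \ {(⟨1, by omega⟩ : Fin n)}))) ∧
    (∏ i, L i) = Ideal.span {α} :=
  dengLi_principal_relations_general
    (isDengLiFamily_fin hn hneven hlp (by lia) hli hleg12 hleg1j hlegij)
    (by rw [hα, hm, Nat.cast_prod]) hgen hP2 hL2
end
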